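/- arXiv:1910.00173 — 3 statements merged into one kernel-verified Lean document; each statement's English description precedes it below -/
import Mathlib

section
/- There is an absolute constant C such that for every α ∈ (0, 1/1000] and all twice continuously differentiable Ω, ξ with compact support contained in (0,∞)×(0,π/2): ⟨L₃(Ω,ξ), ξ ψ₁⟩ ≤ (−1/3 + Cα) ‖ξ ψ₁^{1/2}‖₂² + Cα (L₁₂(Ω)(0)² + ‖L̃₁₂(Ω)/R‖²_{L²(R)}), and ⟨D_β L₃(Ω,ξ), (D_β ξ) ψ₂⟩ ≤ (−1/3 + Cα) ‖(D_β ξ) ψ₂^{1/2}‖₂² + Cα (L₁₂(Ω)(0)² + ‖L̃₁₂(Ω)/R‖²_{L²(R)}). -/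
open Real MeasureTheory Set

noncomputable section

namespace Paper

/-- The domain `(0,∞) × (0,π/2)` in the `(R,β)` variables. -/
def Qdom : Set (ℝ × ℝ) := Set.Ioi (0:ℝ) ×ˢ Set.Ioo (0:ℝ) (Real.pi/2)

/-- Inner product `⟨f,g⟩ = ∫₀^∞ ∫₀^{π/2} f g dβ dR`. -/
def inner2 (f g : ℝ → ℝ → ℝ) : ℝ :=
  ∫ R in Set.Ioi (0:ℝ), ∫ β in Set.Ioo (0:ℝ) (Real.pi/2), f R β * g R β

/-- The `L²` norm `‖f‖₂`. -/
def norm2 (f : ℝ → ℝ → ℝ) : ℝ := Real.sqrt (inner2 f f)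

/-- `‖h‖_{L²(R)}` for functions of `R` alone. -/
def normR (h : ℝ → ℝ) : ℝ := Real.sqrt (∫ R in Set.Ioi (0:ℝ), (h R)^2)

/-- `D_R = R ∂_R`. -/
def DR (f : ℝ → ℝ → ℝ) : ℝ → ℝ → ℝ := fun R β => R * deriv (fun r => f r β) R

/-- `D_R` for functions of `R` alone. -/
def DR1 (h : ℝ → ℝ) : ℝ → ℝ := fun R => R * deriv h R

/-- `D_β = sin(2β) ∂_β`. -/
def Dbeta (f : ℝ → ℝ → ℝ) : ℝ → ℝ → ℝ :=
  fun R β => Real.sin (2*β) * deriv (fun b => f R b) β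

/-- `L₁₂(Ω)(R) = ∫_R^∞ ∫₀^{π/2} Ω(s,β) sin(2β) s⁻¹ dβ ds`. -/
def L12 (Ω : ℝ → ℝ → ℝ) (R : ℝ) : ℝ :=
  ∫ s in Set.Ioi R, ∫ β in Set.Ioo (0:ℝ) (Real.pi/2), Ω s β * Real.sin (2*β) / s

/-- `L̃₁₂(Ω)(R) = L₁₂(Ω)(R) − L₁₂(Ω)(0)`. -/
def tL12 (Ω : ℝ → ℝ → ℝ) (R : ℝ) : ℝ := L12 Ω R - L12 Ω 0

/-- Compact support contained in the open domain `(0,∞)×(0,π/2)`. -/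
def suppIn (f : ℝ → ℝ → ℝ) : Prop :=
  ∃ K : Set (ℝ × ℝ), IsCompact K ∧ K ⊆ Qdom ∧ ∀ x y : ℝ, (x, y) ∉ K → f x y = 0

/-- Integrability over the domain. -/
def Integrable2 (f : ℝ → ℝ → ℝ) : Prop :=
  MeasureTheory.IntegrableOn (Function.uncurry f) Qdom

/-- `Γ(β) = (cos β)^α`. -/
def Γf (α : ℝ) (β : ℝ) : ℝ := Real.cos β ^ α

/-- The normalizing constant `c = (2/π)∫₀^{π/2} Γ(β) sin(2β) dβ`. -/
def cst (α : ℝ) : ℝ :=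
  (2/Real.pi) * ∫ β in Set.Ioo (0:ℝ) (Real.pi/2), Γf α β * Real.sin (2*β)

/-- The approximate profile `Ω̄`. -/
def Ωbar (α : ℝ) : ℝ → ℝ → ℝ := fun R β => (α / cst α) * Γf α β * (3*R/(1+R)^2)

/-- The approximate profile `η̄`. -/
def ηbar (α : ℝ) : ℝ → ℝ → ℝ := fun R β => (α / cst α) * Γf α β * (6*R/(1+R)^3)

/-- The singular weight `φ₁ = (1+R)⁴R⁻⁴ sin(2β)^{-σ}`, `σ = 99/100`. -/
def phi1 : ℝ → ℝ → ℝ := fun R β => (1+R)^4 / R^4 * Real.sin (2*β) ^ (-(99/100 : ℝ))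

/-- The singular weight `φ₂ = (1+R)⁴R⁻⁴ sin(2β)^{-γ}`, `γ = 1 + α/10`. -/
def phi2 (α : ℝ) : ℝ → ℝ → ℝ := fun R β => (1+R)^4 / R^4 * Real.sin (2*β) ^ (-(1 + α/10))

/-- The singular weight `ψ₁ = (1+R)⁴R⁻⁴ (sin β cos β)^{-σ}`. -/
def psi1 : ℝ → ℝ → ℝ := fun R β =>
  (1+R)^4 / R^4 * (Real.sin β * Real.cos β) ^ (-(99/100 : ℝ))

/-- The singular weight `ψ₂ = (1+R)⁴R⁻⁴ (sin β)^{-σ}(cos β)^{-γ}`. -/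
def psi2 (α : ℝ) : ℝ → ℝ → ℝ := fun R β =>
  (1+R)^4 / R^4 * Real.sin β ^ (-(99/100 : ℝ)) * Real.cos β ^ (-(1 + α/10))

/-- `c_ω = −(2/(πα)) L₁₂(Ω)(0)`. -/
def cω (α : ℝ) (Ω : ℝ → ℝ → ℝ) : ℝ := -(2/(Real.pi*α)) * L12 Ω 0

/-- The linearized operator `L₁`. -/
def opL1 (α : ℝ) (Ω η : ℝ → ℝ → ℝ) : ℝ → ℝ → ℝ := fun R β =>
  - DR Ω R β - (3/(1+R)) * Dbeta Ω R β - Ω R β + η R β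
  + cω α Ω * (Ωbar α R β - DR (Ωbar α) R β)

/-- The linearized operator `L₂`. -/
def opL2 (α : ℝ) (Ω η : ℝ → ℝ → ℝ) : ℝ → ℝ → ℝ := fun R β =>
  - DR η R β - (3/(1+R)) * Dbeta η R β + (-2 + 3/(1+R)) * η R β
  + (2/(Real.pi*α)) * tL12 Ω R * ηbar α R β
  + cω α Ω * (ηbar α R β - DR (ηbar α) R β)

/-- `ξ̄` in Cartesian variables. -/
def ξbarC (α : ℝ) (x y : ℝ) : ℝ :=
  -(18*α^2 / cst α) * ∫ z in Set.Ioo (0:ℝ) x,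
      (y/(y^2+z^2)) * (z ^ α * (z^2+y^2) ^ (α/2) / (1 + (z^2+y^2) ^ (α/2))^4)

/-- `ξ̄` in the `(R,β)` variables, via `x = R^{1/α} cos β`, `y = R^{1/α} sin β`. -/
def ξbar (α : ℝ) : ℝ → ℝ → ℝ := fun R β =>
  ξbarC α (R ^ (1/α) * Real.cos β) (R ^ (1/α) * Real.sin β)

/-- The linearized operator `L₃`. -/
def opL3 (α : ℝ) (Ω ξ : ℝ → ℝ → ℝ) : ℝ → ℝ → ℝ := fun R β =>
  - DR ξ R β - (3/(1+R)) * Dbeta ξ R β + (-2 - 3/(1+R)) * ξ R β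
  - (2/(Real.pi*α)) * tL12 Ω R * ξbar α R β
  + cω α Ω * (3 * ξbar α R β - DR (ξbar α) R β)

/-- Weighted Sobolev norm `H^m` with radial weight `w1` and angular weight `w2`:
`‖f‖ = Σ_{0≤k≤m} ‖(D_R^k f)√w1‖₂ + Σ_{i+j≤m−1} ‖(D_R^i D_β^{j+1} f)√w2‖₂`. -/
def Hnorm (m : ℕ) (w1 w2 : ℝ → ℝ → ℝ) (f : ℝ → ℝ → ℝ) : ℝ :=
  (∑ k ∈ Finset.range (m+1),
    norm2 (fun R β => DR^[k] f R β * Real.sqrt (w1 R β)))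
  + ∑ p ∈ (Finset.range (m+1) ×ˢ Finset.range (m+1)).filter
      (fun p => p.1 + p.2 + 1 ≤ m),
      norm2 (fun R β => DR^[p.1] (Dbeta^[p.2+1] f) R β * Real.sqrt (w2 R β))

/-- Sup of `|f|` over the domain `(0,∞)×(0,π/2)`. -/
def supDom (f : ℝ → ℝ → ℝ) : ℝ :=
  ⨆ (R : Set.Ioi (0:ℝ)) (β : Set.Ioo (0:ℝ) (Real.pi/2)), |f R.1 β.1|

/-- The weighted `C¹` norm. -/
def C1norm (α : ℝ) (f : ℝ → ℝ → ℝ) : ℝ :=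
  supDom f + supDom (fun R β => (1+R)/R * DR f R β)
  + supDom (fun R β =>
      (1 + (R * Real.sin (2*β) ^ α) ^ (-(1/40 : ℝ))) * Dbeta f R β)

/-- Boundedness of `f` on the domain. -/
def BddDom (f : ℝ → ℝ → ℝ) : Prop :=
  ∃ M : ℝ, ∀ R ∈ Set.Ioi (0:ℝ), ∀ β ∈ Set.Ioo (0:ℝ) (Real.pi/2), |f R β| ≤ M

/-- Finiteness of the weighted `C¹` norm. -/
def C1Fin (α : ℝ) (f : ℝ → ℝ → ℝ) : Prop :=
  BddDom f ∧ BddDom (fun R β => (1+R)/R * DR f R β) ∧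
  BddDom (fun R β => (1 + (R * Real.sin (2*β) ^ α) ^ (-(1/40 : ℝ))) * Dbeta f R β)

/-- The weighted `W^{l,∞}` norm. -/
def Wnorm (α : ℝ) (l : ℕ) (f : ℝ → ℝ → ℝ) : ℝ :=
  (∑ k ∈ Finset.range (l+1), supDom (DR^[k] f))
  + ∑ p ∈ (Finset.range (l+1) ×ˢ Finset.range (l+1)).filter
      (fun p => p.1 + p.2 ≤ l ∧ 1 ≤ p.2),
      supDom (fun R β => Real.sin (2*β) ^ (-(α/5)) *
        DR^[p.1] (fun R' β' => Dbeta^[p.2] f R' β' / (α/10 + Real.sin (2*β'))) R β)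

/-- Finiteness of the `W^{l,∞}` norm. -/
def WFin (α : ℝ) (l : ℕ) (f : ℝ → ℝ → ℝ) : Prop :=
  (∀ k ≤ l, BddDom (DR^[k] f)) ∧
  ∀ k j : ℕ, k + j ≤ l → 1 ≤ j →
    BddDom (fun R β => Real.sin (2*β) ^ (-(α/5)) *
      DR^[k] (fun R' β' => Dbeta^[j] f R' β' / (α/10 + Real.sin (2*β'))) R β)

/-- `I(f)(x,y) = ∫₀ˣ f(z,y)/z dz`. -/
def Ifun (f : ℝ → ℝ → ℝ) : ℝ → ℝ → ℝ := fun x y => ∫ z in Set.Ioo (0:ℝ) x, f z y / z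

/-- `D_S g = (1/α)(z ∂_z g + y ∂_y g)` in Cartesian variables. -/
def DScart (α : ℝ) (g : ℝ → ℝ → ℝ) : ℝ → ℝ → ℝ := fun a b =>
  (1/α) * (a * deriv (fun a' => g a' b) a + b * deriv (fun b' => g a b') b)

/-- `D_τ g = 2y ∂_y g − 2α (y²/(y²+z²)) D_S g` in Cartesian variables. -/
def DTcart (α : ℝ) (g : ℝ → ℝ → ℝ) : ℝ → ℝ → ℝ := fun a b =>
  2*b * deriv (fun b' => g a b') b - 2*α*(b^2/(b^2+a^2)) * DScart α g a b

/-! ### Parametric integral -/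

/-- Angular kernel. -/
def Aker (α t : ℝ) : ℝ := t ^ α * (1+t^2) ^ (-(α/2)) / (1+t^2)

/-- Logarithmic shift. -/
def kap (α t : ℝ) : ℝ := α/2 * Real.log (1+t^2)

/-- Parametric primitive. -/
def PP (α : ℝ) (l : ℝ → ℝ) (τ T : ℝ) : ℝ := ∫ t in (0:ℝ)..T, Aker α t * l (τ + kap α t)

lemma Aker_cont {α : ℝ} (h : 0 < α) : Continuous (Aker α) := by
  unfold Aker
  have h1 : ∀ t : ℝ, 1 + t^2 ≠ 0 := fun t => by positivity
  refine Continuous.div (Continuous.mul ?_ ?_) (by fun_prop) h1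
  · exact continuous_id.rpow_const (fun x => Or.inr h.le)
  · exact Continuous.rpow_const (by fun_prop) (fun x => Or.inl (h1 x))

lemma kap_cont (α : ℝ) : Continuous (kap α) := by
  unfold kap
  have h1 : ∀ t : ℝ, 1 + t^2 ≠ 0 := fun t => by positivity
  exact continuous_const.mul (Continuous.log (by fun_prop) h1)

lemma PP_cont {α : ℝ} (h : 0 < α) {l : ℝ → ℝ} (hl : Continuous l) :
    Continuous (fun p : ℝ × ℝ => PP α l p.1 p.2) := by
  unfold PP
  have hA := Aker_cont h
  have hk := kap_cont α
  apply intervalIntegral.continuous_parametric_intervalIntegral_of_continuous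
    (f := fun (p : ℝ × ℝ) t => Aker α t * l (p.1 + kap α t)) _ continuous_snd
  show Continuous (fun q : (ℝ × ℝ) × ℝ => Aker α q.2 * l (q.1.1 + kap α q.2))
  fun_prop

lemma PP_deriv_tau {α : ℝ} (h : 0 < α) {l l' : ℝ → ℝ} (hl : ∀ t, HasDerivAt l (l' t) t)
    (hl' : Continuous l') {M : ℝ} (hM : ∀ t, |l' t| ≤ M) (τ T : ℝ) :
    HasDerivAt (fun τ => PP α l τ T) (PP α l' τ T) τ := by
  have hA := Aker_cont h
  have hk := kap_cont α
  have hlc : Continuous l := continuous_iff_continuousAt.2 fun t => (hl t).continuousAt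
  unfold PP
  refine (intervalIntegral.hasDerivAt_integral_of_dominated_loc_of_deriv_le
    (s := Set.univ) (bound := fun t => |Aker α t| * M) Filter.univ_mem
    (F := fun τ t => Aker α t * l (τ + kap α t))
    (F' := fun τ t => Aker α t * l' (τ + kap α t)) ?_ ?_ ?_ ?_ ?_ ?_).2
  · refine Filter.Eventually.of_forall fun x => ?_
    exact Continuous.aestronglyMeasurable (by fun_prop)
  · exact Continuous.intervalIntegrable (by fun_prop) _ _
  · exact Continuous.aestronglyMeasurable (by fun_prop)
  · refine Filter.Eventually.of_forall fun t _ x _ => ?_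
    rw [Real.norm_eq_abs, abs_mul]
    exact mul_le_mul_of_nonneg_left (hM _) (abs_nonneg _)
  · exact Continuous.intervalIntegrable (by fun_prop) _ _
  · refine Filter.Eventually.of_forall fun t _ x _ => ?_
    have := (hl (x + kap α t)).comp_add_const x (kap α t)
    exact this.const_mul _

lemma PP_hasFDeriv {α : ℝ} (h : 0 < α) {l l' : ℝ → ℝ} (hl : ∀ t, HasDerivAt l (l' t) t)
    (hl' : Continuous l') {M : ℝ} (hM : ∀ t, |l' t| ≤ M) (u : ℝ × ℝ) :
    HasStrictFDerivAt (fun p : ℝ × ℝ => PP α l p.1 p.2)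
      ((ContinuousLinearMap.toSpanSingleton ℝ (PP α l' u.1 u.2)).coprod
        (ContinuousLinearMap.toSpanSingleton ℝ (Aker α u.2 * l (u.1 + kap α u.2)))) u := by
  have hA := Aker_cont h
  have hk := kap_cont α
  have hlc : Continuous l := continuous_iff_continuousAt.2 fun t => (hl t).continuousAt
  have key := hasStrictFDerivAt_uncurry_coprod (𝕜 := ℝ) (u := u) (f := PP α l)
    (f₁ := fun τ T => ContinuousLinearMap.toSpanSingleton ℝ (PP α l' τ T))
    (f₂ := fun τ T => ContinuousLinearMap.toSpanSingleton ℝ (Aker α T * l (τ + kap α T)))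
    ?_ ?_ ?_ ?_
  · exact key
  · exact Filter.Eventually.of_forall fun v => (PP_deriv_tau h hl hl' hM v.1 v.2).hasFDerivAt
  · refine Filter.Eventually.of_forall fun v => ?_
    have hc : Continuous (fun t => Aker α t * l (v.1 + kap α t)) := by fun_prop
    exact (intervalIntegral.integral_hasDerivAt_right (hc.intervalIntegrable _ _)
      (hc.stronglyMeasurableAtFilter _ _) hc.continuousAt).hasFDerivAt
  · have := PP_cont h hl'
    apply Continuous.continuousAt
    show Continuous (fun p : ℝ × ℝ => ContinuousLinearMap.toSpanSingleton ℝ (PP α l' p.1 p.2))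
    exact (ContinuousLinearMap.toSpanSingletonCLE (𝕜 := ℝ) (E := ℝ)).continuous.comp this
  · apply Continuous.continuousAt
    show Continuous (fun p : ℝ × ℝ =>
      ContinuousLinearMap.toSpanSingleton ℝ (Aker α p.2 * l (p.1 + kap α p.2)))
    have : Continuous (fun p : ℝ × ℝ => Aker α p.2 * l (p.1 + kap α p.2)) := by fun_prop
    exact (ContinuousLinearMap.toSpanSingletonCLE (𝕜 := ℝ) (E := ℝ)).continuous.comp this

lemma PP_comp {α : ℝ} (h : 0 < α) {l l' : ℝ → ℝ} (hl : ∀ t, HasDerivAt l (l' t) t)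
    (hl' : Continuous l') {M : ℝ} (hM : ∀ t, |l' t| ≤ M) {τ T : ℝ → ℝ} {τ' T' x : ℝ}
    (hτ : HasDerivAt τ τ' x) (hT : HasDerivAt T T' x) :
    HasDerivAt (fun x => PP α l (τ x) (T x))
      (τ' * PP α l' (τ x) (T x) + T' * (Aker α (T x) * l (τ x + kap α (T x)))) x := by
  have := (PP_hasFDeriv h hl hl' hM (τ x, T x)).hasFDerivAt.comp_hasDerivAt x (hτ.prodMk hT)
  refine HasDerivAt.congr_deriv this ?_
  simp

/-! ### The radial profiles -/

/-- Profile. -/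
def h0 (u : ℝ) : ℝ := u^2/(1+u)^4
/-- First log-derivative of the profile. -/
def h1 (u : ℝ) : ℝ := (2*u^2-2*u^3)/(1+u)^5
/-- Second log-derivative of the profile. -/
def h2 (u : ℝ) : ℝ := (4*u^2-12*u^3+4*u^4)/(1+u)^6

/-- Profile in log variable. -/
def l0 (t : ℝ) : ℝ := h0 (Real.exp t)
/-- Its derivative. -/
def l1 (t : ℝ) : ℝ := h1 (Real.exp t)
/-- Its second derivative. -/
def l2 (t : ℝ) : ℝ := h2 (Real.exp t)

lemma l0_deriv (t : ℝ) : HasDerivAt l0 (l1 t) t := by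
  have hp : 1 + Real.exp t ≠ 0 := by positivity
  have he := Real.hasDerivAt_exp t
  have := (he.pow 2).div ((he.const_add 1).pow 4) (pow_ne_zero 4 hp)
  refine HasDerivAt.congr_deriv (f := l0) this ?_
  simp only [l1, h1, Pi.pow_apply]
  field_simp
  ring

lemma l1_deriv (t : ℝ) : HasDerivAt l1 (l2 t) t := by
  have hp : 1 + Real.exp t ≠ 0 := by positivity
  have he := Real.hasDerivAt_exp t
  have := (((he.pow 2).const_mul 2).sub ((he.pow 3).const_mul 2)).div
    ((he.const_add 1).pow 5) (pow_ne_zero 5 hp)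
  refine HasDerivAt.congr_deriv (f := l1) this ?_
  simp only [l2, h2, Pi.pow_apply, Pi.sub_apply]
  field_simp
  ring

lemma l0_cont : Continuous l0 := continuous_iff_continuousAt.2 fun t => (l0_deriv t).continuousAt
lemma l1_cont : Continuous l1 := continuous_iff_continuousAt.2 fun t => (l1_deriv t).continuousAt
lemma l2_cont : Continuous l2 := by
  unfold l2 h2
  refine Continuous.div (by fun_prop) (by fun_prop) fun t => ?_
  positivity

lemma h0_nonneg {u : ℝ} (hu : 0 < u) : 0 ≤ h0 u := by unfold h0; positivity

lemma h1_bound {u : ℝ} (hu : 0 < u) : |h1 u| ≤ 2 * h0 u := by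
  unfold h1 h0
  rw [abs_div, abs_of_pos (show 0 < (1+u)^5 by positivity), div_le_iff₀ (by positivity)]
  have : 2 * (u^2/(1+u)^4) * (1+u)^5 = 2*u^2 + 2*u^3 := by field_simp
  rw [this, abs_le]
  constructor <;> nlinarith [pow_pos hu 2, pow_pos hu 3]

lemma h2_bound {u : ℝ} (hu : 0 < u) : |h2 u| ≤ 6 * h0 u := by
  unfold h2 h0
  rw [abs_div, abs_of_pos (show 0 < (1+u)^6 by positivity), div_le_iff₀ (by positivity)]
  have : 6 * (u^2/(1+u)^4) * (1+u)^6 = 6*u^2*(1+u)^2 := by field_simp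
  rw [this, abs_le]
  constructor <;> nlinarith [pow_pos hu 2, pow_pos hu 3, pow_pos hu 4]

lemma h0_le_one {u : ℝ} (hu : 0 < u) : h0 u ≤ 1 := by
  unfold h0
  rw [div_le_one (by positivity)]
  nlinarith [pow_pos hu 2, pow_pos hu 3, pow_pos hu 4]

/-- The main profile bound: `u ∈ [R s, R]`. -/
lemma h0_bound {u R s : ℝ} (hs : 0 < s) (hs1 : s ≤ 1) (hR : 0 < R) (h1 : R * s ≤ u)
    (h2 : u ≤ R) : h0 u ≤ R^2/(1+R)^3 * (s^3)⁻¹ := by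
  have hu : 0 < u := lt_of_lt_of_le (by positivity) h1
  unfold h0
  have e1 : u^2/(1+u)^4 ≤ u^2/(1+u)^3 := by
    apply div_le_div_of_nonneg_left (by positivity) (by positivity)
    exact pow_le_pow_right₀ (by linarith) (by norm_num)
  have e2 : s * (1+R) ≤ 1 + u := by nlinarith
  have e3 : (s*(1+R))^3 ≤ (1+u)^3 := pow_le_pow_left₀ (by positivity) e2 3
  have e4 : u^2/(1+u)^3 ≤ R^2/(s*(1+R))^3 :=
    div_le_div₀ (by positivity) (pow_le_pow_left₀ hu.le h2 2) (by positivity) e3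
  have e5 : R^2/(s*(1+R))^3 = R^2/(1+R)^3 * (s^3)⁻¹ := by
    rw [mul_pow]; field_simp
  linarith


/-- The rescaled profile. -/
def XX (α : ℝ) (l : ℝ → ℝ) (R β : ℝ) : ℝ :=
  PP α l (Real.log R + α * Real.log (Real.sin β)) (Real.cos β / Real.sin β)

lemma sin_pos_Q {β : ℝ} (hβ : β ∈ Set.Ioo (0:ℝ) (Real.pi/2)) : 0 < Real.sin β :=
  Real.sin_pos_of_pos_of_lt_pi hβ.1 (by linarith [hβ.2, Real.pi_pos])

lemma cos_pos_Q {β : ℝ} (hβ : β ∈ Set.Ioo (0:ℝ) (Real.pi/2)) : 0 < Real.cos β :=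
  Real.cos_pos_of_mem_Ioo ⟨by linarith [hβ.1, Real.pi_pos], hβ.2⟩

lemma exp_shift {α R β t : ℝ} (hR : 0 < R) (hs : 0 < Real.sin β) :
    Real.exp (Real.log R + α * Real.log (Real.sin β) + kap α t)
      = R * Real.sin β ^ α * (1+t^2) ^ (α/2) := by
  have h1 : 0 < 1 + t^2 := by positivity
  rw [Real.exp_add, Real.exp_add, Real.exp_log hR, Real.rpow_def_of_pos hs,
    Real.rpow_def_of_pos h1, kap, mul_comm α, mul_comm (α/2)]

lemma xibar_eq {α R β : ℝ} (hα : 0 < α) (hR : 0 < R) (hβ : β ∈ Set.Ioo (0:ℝ) (Real.pi/2)) :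
    ξbar α R β = -(18*α^2 / cst α) * XX α l0 R β := by
  have hs := sin_pos_Q hβ
  have hc := cos_pos_Q hβ
  have hr : 0 < R ^ (1/α) := Real.rpow_pos_of_pos hR _
  have hy : 0 < R ^ (1/α) * Real.sin β := by positivity
  have hx : 0 < R ^ (1/α) * Real.cos β := by positivity
  have hya : (R ^ (1/α) * Real.sin β) ^ α = R * Real.sin β ^ α := by
    rw [Real.mul_rpow hr.le hs.le, ← Real.rpow_mul hR.le, one_div_mul_cancel hα.ne', Real.rpow_one]
  unfold ξbar ξbarC XX PP
  congr 1
  set y := R ^ (1/α) * Real.sin β with hydef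
  have hxy : R ^ (1/α) * Real.cos β = y * (Real.cos β / Real.sin β) := by
    rw [hydef]; field_simp
  rw [← integral_Ioc_eq_integral_Ioo, ← intervalIntegral.integral_of_le hx.le, hxy]
  have hsub := intervalIntegral.mul_integral_comp_mul_left (a := 0) (b := Real.cos β / Real.sin β)
    (f := fun z => (y/(y^2+z^2)) * (z ^ α * (z^2+y^2) ^ (α/2) / (1 + (z^2+y^2) ^ (α/2))^4)) (c := y)
  rw [mul_zero] at hsub
  rw [← hsub, ← intervalIntegral.integral_const_mul]
  apply intervalIntegral.integral_congr
  intro t ht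
  have ht0 : 0 ≤ t := by
    rw [Set.uIcc_of_le (by positivity)] at ht; exact ht.1
  have h1 : 0 < 1 + t^2 := by positivity
  have hq : ((y*t)^2 + y^2) ^ (α/2) = R * Real.sin β ^ α * (1+t^2) ^ (α/2) := by
    rw [← hya]
    have : (y*t)^2 + y^2 = y^2 * (1+t^2) := by ring
    rw [this, Real.mul_rpow (by positivity) h1.le, ← Real.rpow_natCast y 2, ← Real.rpow_mul hy.le]
    congr 2
    push_cast; ring
  have hzt : (y*t) ^ α = R * Real.sin β ^ α * t ^ α := by
    rw [Real.mul_rpow hy.le ht0, hya]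
  have hcanc : (1+t^2) ^ (-(α/2)) * (1+t^2) ^ (α/2) = 1 := by
    rw [← Real.rpow_add h1]; simp
  simp only [l0, exp_shift hR hs, h0, Aker, hq, hzt]
  have hqp : 0 < (1+t^2) ^ (α/2) := Real.rpow_pos_of_pos h1 _
  have hneg : (1+t^2) ^ (-(α/2)) = ((1+t^2) ^ (α/2))⁻¹ := Real.rpow_neg h1.le _
  have hsp : 0 < Real.sin β ^ α := Real.rpow_pos_of_pos hs _
  rw [hneg]
  generalize (1+t^2) ^ (α/2) = q at *
  generalize Real.sin β ^ α = s at *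
  generalize t ^ α = k at *
  have hd : 0 < 1 + R * s * q := by positivity
  have hd2 : 0 < y^2 + (y*t)^2 := by positivity
  have e : y * (y/(y^2+(y*t)^2)) = 1/(1+t^2) := by
    rw [mul_div_assoc', div_eq_div_iff hd2.ne' h1.ne']; ring
  rw [← mul_assoc, e]
  field_simp

lemma XX_cont {α : ℝ} (h : 0 < α) {l : ℝ → ℝ} (hl : Continuous l) :
    ContinuousOn (fun p : ℝ × ℝ => XX α l p.1 p.2) Qdom := by
  unfold XX
  refine (PP_cont h hl).comp_continuousOn (f := fun p : ℝ × ℝ =>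
    (Real.log p.1 + α * Real.log (Real.sin p.2), Real.cos p.2 / Real.sin p.2)) ?_
  have h1 : ∀ p ∈ Qdom, p.1 ≠ 0 := fun p hp => (show 0 < p.1 from hp.1).ne'
  have h2 : ∀ p ∈ Qdom, Real.sin p.2 ≠ 0 := fun p hp => (sin_pos_Q hp.2).ne'
  refine ContinuousOn.prodMk (ContinuousOn.add ?_ (continuousOn_const.mul ?_)) ?_
  · exact continuousOn_fst.log h1
  · exact ContinuousOn.log (by fun_prop) h2
  · exact ContinuousOn.div (by fun_prop) (by fun_prop) h2

lemma XX_DR {α : ℝ} (h : 0 < α) {l l' : ℝ → ℝ} (hl : ∀ t, HasDerivAt l (l' t) t)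
    (hl' : Continuous l') {M : ℝ} (hM : ∀ t, |l' t| ≤ M) {R β : ℝ} (hR : 0 < R) :
    HasDerivAt (fun r => XX α l r β) (R⁻¹ * XX α l' R β) R := by
  unfold XX
  have h1 : HasDerivAt (fun r => Real.log r + α * Real.log (Real.sin β)) R⁻¹ R :=
    (Real.hasDerivAt_log hR.ne').add_const _
  have h2 : HasDerivAt (fun _ : ℝ => Real.cos β / Real.sin β) 0 R := hasDerivAt_const _ _
  have := PP_comp h hl hl' hM h1 h2
  simpa using this

lemma Aker_cot {α β : ℝ} (hs : 0 < Real.sin β) (hc : 0 < Real.cos β) :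
    Aker α (Real.cos β / Real.sin β) = Real.cos β ^ α * Real.sin β ^ 2 := by
  have e : 1 + (Real.cos β / Real.sin β)^2 = (Real.sin β ^ 2)⁻¹ := by
    field_simp; exact Real.sin_sq_add_cos_sq β
  unfold Aker
  rw [e, Real.div_rpow hc.le hs.le, Real.inv_rpow (by positivity), Real.rpow_neg (by positivity),
    inv_inv, ← Real.rpow_natCast (Real.sin β) 2, ← Real.rpow_mul hs.le]
  have : ((2:ℕ):ℝ) * (α/2) = α := by push_cast; ring
  rw [this]
  have := Real.rpow_pos_of_pos hs α
  have h2 := Real.rpow_pos_of_pos hs ((2:ℕ):ℝ)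
  field_simp

lemma kap_cot {α β : ℝ} (hs : 0 < Real.sin β) :
    kap α (Real.cos β / Real.sin β) = - (α * Real.log (Real.sin β)) := by
  have e : 1 + (Real.cos β / Real.sin β)^2 = (Real.sin β ^ 2)⁻¹ := by
    field_simp; exact Real.sin_sq_add_cos_sq β
  unfold kap
  rw [e, Real.log_inv, Real.log_pow]; push_cast; ring

lemma XX_Dbeta {α : ℝ} (h : 0 < α) {l l' : ℝ → ℝ} (hl : ∀ t, HasDerivAt l (l' t) t)
    (hl' : Continuous l') {M : ℝ} (hM : ∀ t, |l' t| ≤ M) {R β : ℝ}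
    (hβ : β ∈ Set.Ioo (0:ℝ) (Real.pi/2)) :
    HasDerivAt (fun b => XX α l R b)
      (α * (Real.cos β / Real.sin β) * XX α l' R β - Real.cos β ^ α * l (Real.log R)) β := by
  have hs := sin_pos_Q hβ
  have hc := cos_pos_Q hβ
  unfold XX
  have h1 : HasDerivAt (fun b => Real.log R + α * Real.log (Real.sin b))
      (α * (Real.cos β / Real.sin β)) β :=
    (((Real.hasDerivAt_sin β).log hs.ne').const_mul α).const_add _
  have h2 : HasDerivAt (fun b : ℝ => Real.cos b / Real.sin b) (-(Real.sin β ^ 2)⁻¹) β := by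
    have := (Real.hasDerivAt_cos β).div (Real.hasDerivAt_sin β) hs.ne'
    refine HasDerivAt.congr_deriv this ?_
    have := Real.sin_sq_add_cos_sq β
    field_simp
    linarith
  have := PP_comp h hl hl' hM h1 h2
  refine HasDerivAt.congr_deriv this ?_
  rw [Aker_cot hs hc, kap_cot hs]
  have : Real.log R + α * Real.log (Real.sin β) + -(α * Real.log (Real.sin β)) = Real.log R := by
    ring
  rw [this]
  field_simp
  ring

lemma Aker_bound {α t : ℝ} (hα : 0 < α) (ht : 0 ≤ t) : |Aker α t| ≤ (1+t^2)⁻¹ := by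
  have h1 : 0 < 1 + t^2 := by positivity
  unfold Aker
  rw [abs_of_nonneg (by positivity), div_eq_mul_inv]
  refine mul_le_of_le_one_left (by positivity) ?_
  rw [Real.rpow_neg h1.le, ← div_eq_mul_inv, div_le_one (by positivity)]
  calc t ^ α = (t^2) ^ (α/2) := by
        rw [← Real.rpow_natCast t 2, ← Real.rpow_mul ht]; congr 1; push_cast; ring
    _ ≤ _ := Real.rpow_le_rpow (by positivity) (by linarith) (by positivity)

lemma XX_bound {α : ℝ} (hα : 0 < α) {l : ℝ → ℝ} {N : ℝ} (hN : 0 ≤ N)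
    (hl : ∀ t, |l t| ≤ N * h0 (Real.exp t)) {R β : ℝ} (hR : 0 < R)
    (hβ : β ∈ Set.Ioo (0:ℝ) (Real.pi/2)) :
    |XX α l R β| ≤ 2 * N * (R^2/(1+R)^3 * ((Real.sin β ^ α)^3)⁻¹) := by
  have hs := sin_pos_Q hβ
  have hc := cos_pos_Q hβ
  have hsp : 0 < Real.sin β ^ α := Real.rpow_pos_of_pos hs _
  have hs1 : Real.sin β ^ α ≤ 1 := Real.rpow_le_one hs.le (Real.sin_le_one β) hα.le
  set B := R^2/(1+R)^3 * ((Real.sin β ^ α)^3)⁻¹ with hB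
  have hB0 : 0 ≤ B := by positivity
  unfold XX PP
  have hT : 0 ≤ Real.cos β / Real.sin β := by positivity
  set T := Real.cos β / Real.sin β with hTdef
  have hi : IntervalIntegrable (fun t : ℝ => (N * B) * (1+t^2)⁻¹) volume 0 T := by
    apply Continuous.intervalIntegrable
    exact continuous_const.mul (Continuous.inv₀ (by fun_prop) fun t => by positivity)
  have key := intervalIntegral.norm_integral_le_of_norm_le (μ := volume) hT
    (f := fun t => Aker α t * l (Real.log R + α * Real.log (Real.sin β) + kap α t))
    (g := fun t => (N * B) * (1+t^2)⁻¹) (Filter.Eventually.of_forall fun t ht => ?_) hi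
  · rw [Real.norm_eq_abs] at key
    refine key.trans ?_
    rw [intervalIntegral.integral_const_mul, integral_inv_one_add_sq]
    have h2 : Real.arctan T - Real.arctan 0 ≤ 2 := by
      rw [Real.arctan_zero]
      linarith [Real.arctan_lt_pi_div_two T, Real.pi_lt_four]
    nlinarith [mul_nonneg hN hB0]
  · have ht0 : 0 ≤ t := ht.1.le
    have h1 : 0 < 1 + t^2 := by positivity
    rw [Real.norm_eq_abs, abs_mul, mul_comm (N*B)]
    refine mul_le_mul (Aker_bound hα ht0) ?_ (abs_nonneg _) (by positivity)
    refine (hl _).trans (mul_le_mul_of_nonneg_left ?_ hN)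
    rw [exp_shift hR hs]
    have hq1 : 1 ≤ (1+t^2) ^ (α/2) := Real.one_le_rpow (by nlinarith) (by positivity)
    have hq2 : Real.sin β ^ α * (1+t^2) ^ (α/2) ≤ 1 := by
      have e : Real.sin β ^ α = (Real.sin β ^ 2) ^ (α/2) := by
        rw [← Real.rpow_natCast (Real.sin β) 2, ← Real.rpow_mul hs.le]; congr 1; push_cast; ring
      rw [e, ← Real.mul_rpow (by positivity) h1.le]
      refine Real.rpow_le_one (by positivity) ?_ (by positivity)
      have : t * Real.sin β ≤ Real.cos β := by
        have := ht.2
        rw [hTdef, le_div_iff₀ hs] at this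
        exact this
      nlinarith [Real.sin_sq_add_cos_sq β, mul_nonneg ht0 hs.le]
    apply h0_bound hsp hs1 hR
    · nlinarith [mul_pos hR hsp]
    · nlinarith

lemma cst_eq {α : ℝ} (hα : 0 < α) : cst α = 4 / (Real.pi * (α + 2)) := by
  have hcint : ∫ β in Set.Ioo (0:ℝ) (Real.pi/2), Γf α β * Real.sin (2*β) = 2 / (α+2) := by
    rw [← integral_Ioc_eq_integral_Ioo, ← intervalIntegral.integral_of_le (by positivity)]
    have hd : ∀ x ∈ Set.uIcc (0:ℝ) (Real.pi/2), HasDerivAt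
        (fun x => - (2/(α+2)) * Real.cos x ^ (α+2)) (Γf α x * Real.sin (2*x)) x := by
      intro x hx
      rw [Set.uIcc_of_le (by positivity)] at hx
      have hc : 0 ≤ Real.cos x := Real.cos_nonneg_of_mem_Icc
        ⟨by linarith [hx.1, Real.pi_pos], hx.2⟩
      have := ((Real.hasDerivAt_cos x).rpow_const (p := α+2) (Or.inr (by linarith))).const_mul
        (- (2/(α+2)))
      refine HasDerivAt.congr_deriv this ?_
      have e : Real.cos x ^ (α + 2 - 1) = Real.cos x ^ α * Real.cos x := by
        rw [show α + 2 - 1 = α + 1 by ring, Real.rpow_add_one' hc (by linarith)]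
      rw [e, Real.sin_two_mul, Γf]
      field_simp
    rw [intervalIntegral.integral_eq_sub_of_hasDerivAt hd]
    · simp [Real.zero_rpow (show α + 2 ≠ 0 by linarith)]
    · apply Continuous.intervalIntegrable
      unfold Γf
      exact (Real.continuous_cos.rpow_const fun x => Or.inr hα.le).mul (by fun_prop)
  unfold cst
  rw [hcint]
  have := Real.pi_pos
  field_simp
  norm_num

lemma K_bound {α : ℝ} (hα : 0 < α) (h1 : α ≤ 1/1000) : |-(18*α^2 / cst α)| ≤ 60 * α^2 := by
  rw [cst_eq hα, abs_neg, abs_of_nonneg (by positivity)]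
  have := Real.pi_lt_d2
  have := Real.pi_pos
  rw [div_div_eq_mul_div]
  have : Real.pi * (α+2) ≤ 7 := by nlinarith
  rw [div_le_iff₀ (by norm_num)]
  nlinarith [sq_nonneg α]

lemma l0_b (t : ℝ) : |l0 t| ≤ 1 * h0 (Real.exp t) := by
  rw [l0, abs_of_nonneg (h0_nonneg (Real.exp_pos t)), one_mul]
lemma l1_b (t : ℝ) : |l1 t| ≤ 2 * h0 (Real.exp t) := h1_bound (Real.exp_pos t)
lemma l2_b (t : ℝ) : |l2 t| ≤ 6 * h0 (Real.exp t) := h2_bound (Real.exp_pos t)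
lemma l1_M (t : ℝ) : |l1 t| ≤ 2 := (l1_b t).trans (by linarith [h0_le_one (Real.exp_pos t)])
lemma l2_M (t : ℝ) : |l2 t| ≤ 6 := (l2_b t).trans (by linarith [h0_le_one (Real.exp_pos t)])


/-! ### Compactly supported functions on the domain -/

lemma Q_open : IsOpen Qdom := isOpen_Ioi.prod isOpen_Ioo

lemma cs_cont {f : ℝ × ℝ → ℝ} {K : Set (ℝ × ℝ)} (hK : IsCompact K) (hKQ : K ⊆ Qdom)
    (hc : ContinuousOn f Qdom) (h0 : ∀ p, p ∉ K → f p = 0) : Continuous f := by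
  rw [continuous_iff_continuousAt]
  intro p
  by_cases hp : p ∈ K
  · exact hc.continuousAt (Q_open.mem_nhds (hKQ hp))
  · have : f =ᶠ[nhds p] fun _ => 0 := by
      filter_upwards [hK.isClosed.isOpen_compl.mem_nhds hp] with x hx using h0 x hx
    exact continuousAt_const.congr this.symm

lemma cs_int {f : ℝ × ℝ → ℝ} {K : Set (ℝ × ℝ)} (hK : IsCompact K) (hKQ : K ⊆ Qdom)
    (hc : ContinuousOn f Qdom) (h0 : ∀ p, p ∉ K → f p = 0) : Integrable f :=
  (cs_cont hK hKQ hc h0).integrable_of_hasCompactSupport (HasCompactSupport.intro hK h0)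

lemma setInt_Q {f : ℝ → ℝ → ℝ} (hf : IntegrableOn (fun p : ℝ × ℝ => f p.1 p.2) Qdom) :
    ∫ R in Set.Ioi (0:ℝ), ∫ β in Set.Ioo (0:ℝ) (Real.pi/2), f R β
      = ∫ p in Qdom, f p.1 p.2 := by
  unfold Qdom at *
  rw [Measure.volume_eq_prod] at *
  exact (setIntegral_prod _ hf).symm

lemma int_dR_zero {G G' : ℝ × ℝ → ℝ} {K : Set (ℝ × ℝ)} (hK : IsCompact K) (hKQ : K ⊆ Qdom)
    (hG : ∀ p, p ∉ K → G p = 0) (hG' : ∀ p, p ∉ K → G' p = 0)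
    (hc : ContinuousOn G Qdom) (hc' : ContinuousOn G' Qdom)
    (hd : ∀ p ∈ Qdom, HasDerivAt (fun r => G (r, p.2)) (G' p) p.1) :
    ∫ p in Qdom, G' p = 0 := by
  have hi := cs_int hK hKQ hc' hG'
  rw [setIntegral_eq_integral_of_forall_compl_eq_zero (fun x hx => hG' x fun h => hx (hKQ h))]
  rw [Measure.volume_eq_prod] at *
  rw [integral_prod_symm _ hi]
  have hz : ∀ b, ∫ r, G' (r, b) = 0 := by
    intro b
    have hcG := cs_cont hK hKQ hc hG
    have hcG' := cs_cont hK hKQ hc' hG'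
    have hcomp : IsCompact (Prod.fst '' K) := hK.image continuous_fst
    apply integral_eq_zero_of_hasDerivAt_of_integrable (f := fun r => G (r, b))
    · intro r
      by_cases hp : (r, b) ∈ K
      · exact hd _ (hKQ hp)
      · have : (fun r => G (r, b)) =ᶠ[nhds r] fun _ => 0 := by
          have hcr : ContinuousAt (fun r : ℝ => (r, b)) r := by fun_prop
          filter_upwards [hcr (hK.isClosed.isOpen_compl.mem_nhds hp)] with x hx using hG _ hx
        rw [hG' _ hp]
        exact (hasDerivAt_const r (0:ℝ)).congr_of_eventuallyEq this
    · apply Continuous.integrable_of_hasCompactSupport (by fun_prop)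
      exact HasCompactSupport.intro hcomp fun x hx => hG' _ fun h => hx ⟨_, h, rfl⟩
    · apply Continuous.integrable_of_hasCompactSupport (by fun_prop)
      exact HasCompactSupport.intro hcomp fun x hx => hG _ fun h => hx ⟨_, h, rfl⟩
  simp [hz]

lemma int_dbeta_zero {G G' : ℝ × ℝ → ℝ} {K : Set (ℝ × ℝ)} (hK : IsCompact K) (hKQ : K ⊆ Qdom)
    (hG : ∀ p, p ∉ K → G p = 0) (hG' : ∀ p, p ∉ K → G' p = 0)
    (hc : ContinuousOn G Qdom) (hc' : ContinuousOn G' Qdom)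
    (hd : ∀ p ∈ Qdom, HasDerivAt (fun b => G (p.1, b)) (G' p) p.2) :
    ∫ p in Qdom, G' p = 0 := by
  have hi := cs_int hK hKQ hc' hG'
  rw [setIntegral_eq_integral_of_forall_compl_eq_zero (fun x hx => hG' x fun h => hx (hKQ h))]
  rw [Measure.volume_eq_prod] at *
  rw [integral_prod _ hi]
  have hz : ∀ r, ∫ b, G' (r, b) = 0 := by
    intro r
    have hcG := cs_cont hK hKQ hc hG
    have hcG' := cs_cont hK hKQ hc' hG'
    have hcomp : IsCompact (Prod.snd '' K) := hK.image continuous_snd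
    apply integral_eq_zero_of_hasDerivAt_of_integrable (f := fun b => G (r, b))
    · intro b
      by_cases hp : (r, b) ∈ K
      · exact hd _ (hKQ hp)
      · have : (fun b => G (r, b)) =ᶠ[nhds b] fun _ => 0 := by
          have hcr : ContinuousAt (fun b : ℝ => (r, b)) b := by fun_prop
          filter_upwards [hcr (hK.isClosed.isOpen_compl.mem_nhds hp)] with x hx using hG _ hx
        rw [hG' _ hp]
        exact (hasDerivAt_const b (0:ℝ)).congr_of_eventuallyEq this
    · apply Continuous.integrable_of_hasCompactSupport (by fun_prop)
      exact HasCompactSupport.intro hcomp fun x hx => hG' _ fun h => hx ⟨_, h, rfl⟩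
    · apply Continuous.integrable_of_hasCompactSupport (by fun_prop)
      exact HasCompactSupport.intro hcomp fun x hx => hG _ fun h => hx ⟨_, h, rfl⟩
  simp [hz]

/-! ### Partial derivatives -/

lemma hasDerivAt_R {g : ℝ → ℝ → ℝ} (hg : Differentiable ℝ (Function.uncurry g)) (R β : ℝ) :
    HasDerivAt (fun r => g r β) (fderiv ℝ (Function.uncurry g) (R, β) (1, 0)) R :=
  (hg (R, β)).hasFDerivAt.comp_hasDerivAt (f := fun r : ℝ => (r, β)) R
    ((hasDerivAt_id R).prodMk (hasDerivAt_const R β))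

lemma hasDerivAt_beta {g : ℝ → ℝ → ℝ} (hg : Differentiable ℝ (Function.uncurry g)) (R β : ℝ) :
    HasDerivAt (fun b => g R b) (fderiv ℝ (Function.uncurry g) (R, β) (0, 1)) β :=
  (hg (R, β)).hasFDerivAt.comp_hasDerivAt β ((hasDerivAt_const β R).prodMk (hasDerivAt_id β))

lemma fderiv_zero {g : ℝ → ℝ → ℝ} {K : Set (ℝ × ℝ)} (hK : IsCompact K)
    (h0 : ∀ x y : ℝ, (x, y) ∉ K → g x y = 0) {p : ℝ × ℝ} (hp : p ∉ K) :
    fderiv ℝ (Function.uncurry g) p = 0 := by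
  have : Function.uncurry g =ᶠ[nhds p] fun _ => 0 := by
    filter_upwards [hK.isClosed.isOpen_compl.mem_nhds hp] with x hx using h0 x.1 x.2 hx
  rw [this.fderiv_eq]; simp

/-! ### Energy estimate -/

/-- Radial weight. -/
def wR (R : ℝ) : ℝ := (1+R)^4 / R^4
/-- Angular weight. -/
def vB (p q β : ℝ) : ℝ := Real.sin β ^ (-p) * Real.cos β ^ (-q)

lemma wR_pos {R : ℝ} (h : 0 < R) : 0 < wR R := by unfold wR; positivity

lemma vB_pos {p q β : ℝ} (hβ : β ∈ Set.Ioo (0:ℝ) (Real.pi/2)) : 0 < vB p q β :=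
  mul_pos (Real.rpow_pos_of_pos (sin_pos_Q hβ) _) (Real.rpow_pos_of_pos (cos_pos_Q hβ) _)

lemma RwR_deriv {R : ℝ} (h : 0 < R) :
    HasDerivAt (fun r => r * wR r) (wR R * (1 - 4/(1+R))) R := by
  have h1 := (hasDerivAt_id R).mul ((((hasDerivAt_id R).const_add 1).pow 4).div
    ((hasDerivAt_id R).pow 4) (pow_ne_zero 4 h.ne'))
  refine HasDerivAt.congr_deriv (f := fun r => r * wR r) h1 ?_
  have : 0 < 1 + R := by linarith
  simp only [wR, Pi.pow_apply, Pi.div_apply, id]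
  field_simp
  ring

lemma svB_deriv {p q β : ℝ} (hβ : β ∈ Set.Ioo (0:ℝ) (Real.pi/2)) :
    HasDerivAt (fun b => Real.sin (2*b) * vB p q b)
      ((2*(1-p)*Real.cos β^2 + 2*(q-1)*Real.sin β^2) * vB p q β) β := by
  have hs := sin_pos_Q hβ
  have hc := cos_pos_Q hβ
  have hS : HasDerivAt (fun b => Real.sin (2*b)) (Real.cos (2*β) * 2) β := by
    have := ((hasDerivAt_id β).const_mul 2).sin
    simpa using this
  have h1 := hS.mul (((Real.hasDerivAt_sin β).rpow_const (p := -p) (Or.inl hs.ne')).mul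
    ((Real.hasDerivAt_cos β).rpow_const (p := -q) (Or.inl hc.ne')))
  refine HasDerivAt.congr_deriv (f := fun b => Real.sin (2*b) * vB p q b) h1 ?_
  simp only [vB, Pi.mul_apply]
  rw [Real.rpow_sub_one hs.ne', Real.rpow_sub_one hc.ne', Real.sin_two_mul, Real.cos_two_mul']
  field_simp
  ring

lemma wR_cont : ContinuousOn (fun p : ℝ × ℝ => wR p.1) Qdom := by
  unfold wR
  exact ContinuousOn.div (by fun_prop) (by fun_prop)
    fun x hx => pow_ne_zero 4 (show 0 < x.1 from hx.1).ne'

lemma vB_cont (p q : ℝ) : ContinuousOn (fun x : ℝ × ℝ => vB p q x.2) Qdom := by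
  unfold vB
  refine ContinuousOn.mul ?_ ?_
  · exact ContinuousOn.rpow_const (by fun_prop) fun x hx => Or.inl (sin_pos_Q hx.2).ne'
  · exact ContinuousOn.rpow_const (by fun_prop) fun x hx => Or.inl (cos_pos_Q hx.2).ne'

lemma inv1R_cont (c : ℝ) : ContinuousOn (fun p : ℝ × ℝ => c/(1+p.1)) Qdom :=
  ContinuousOn.div (by fun_prop) (by fun_prop)
    fun x hx => by have : 0 < x.1 := hx.1; positivity

lemma energy_alg {R w v g gR gb S k F ρ : ℝ} (hw : 0 < w) (hv : 0 < v) (hk : k ≤ 1)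
    (hρ : 0 ≤ ρ) :
    (-(R*gR) - 3*ρ*(S*gb) + (-2 - 3*ρ)*g + F) * (g * (w*v))
     ≤ -(1/2) * ((w*(1-4*ρ))*(v*g^2) + (R*w)*(v*(2*g*gR)))
       + -(1/2) * (3*ρ*(w*((k*v)*g^2 + (S*v)*(2*g*gb))))
       + -(1/2) * (g^2*(w*v)) + (1/4) * (F^2*(w*v)) := by
  have hwv : 0 < w * v := mul_pos hw hv
  have h1 : 0 ≤ (w*v) * (g - F/2)^2 := by positivity
  have h2 : 0 ≤ (w*v) * (g^2 * (ρ * (7/2 + 3/2*(1-k)))) := by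
    have : 0 ≤ 1 - k := by linarith
    positivity
  nlinarith [h1, h2]

lemma energy {p q : ℝ} (hp : 1/2 ≤ p) (hq : q ≤ 3/2) {g F : ℝ → ℝ → ℝ}
    (hg : ContDiff ℝ 1 (Function.uncurry g)) {K : Set (ℝ × ℝ)} (hK : IsCompact K)
    (hKQ : K ⊆ Qdom) (hg0 : ∀ x y : ℝ, (x, y) ∉ K → g x y = 0)
    (hF : ContinuousOn (fun x : ℝ × ℝ => F x.1 x.2) Qdom) {b : ℝ × ℝ → ℝ}
    (hb : IntegrableOn b Qdom)
    (hFb : ∀ x ∈ Qdom, (F x.1 x.2)^2 * (wR x.1 * vB p q x.2) ≤ b x)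
    {E ψ : ℝ → ℝ → ℝ}
    (hE : ∀ x ∈ Qdom, E x.1 x.2 = - DR g x.1 x.2 - (3/(1+x.1)) * Dbeta g x.1 x.2
      + (-2 - 3/(1+x.1)) * g x.1 x.2 + F x.1 x.2)
    (hψ : ∀ x ∈ Qdom, ψ x.1 x.2 = wR x.1 * vB p q x.2) :
    inner2 E (fun R β => g R β * ψ R β)
      ≤ -(1/2) * (norm2 (fun R β => g R β * Real.sqrt (ψ R β)))^2 + (1/4) * ∫ x in Qdom, b x := by
  have hgd : Differentiable ℝ (Function.uncurry g) := hg.differentiable (by norm_num)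
  have hgc : Continuous (fun x : ℝ × ℝ => g x.1 x.2) := hg.continuous
  have hfc : Continuous (fderiv ℝ (Function.uncurry g)) := hg.continuous_fderiv (by norm_num)
  set gR : ℝ × ℝ → ℝ := fun x => fderiv ℝ (Function.uncurry g) x (1, 0) with hgR
  set gb : ℝ × ℝ → ℝ := fun x => fderiv ℝ (Function.uncurry g) x (0, 1) with hgb
  have hgRc : Continuous gR := hfc.clm_apply continuous_const
  have hgbc : Continuous gb := hfc.clm_apply continuous_const
  have hDR : ∀ x : ℝ × ℝ, DR g x.1 x.2 = x.1 * gR x := fun x => by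
    unfold DR; rw [(hasDerivAt_R hgd x.1 x.2).deriv]
  have hDb : ∀ x : ℝ × ℝ, Dbeta g x.1 x.2 = Real.sin (2*x.2) * gb x := fun x => by
    unfold Dbeta; rw [(hasDerivAt_beta hgd x.1 x.2).deriv]
  have hgz : ∀ x : ℝ × ℝ, x ∉ K → g x.1 x.2 = 0 := fun x hx => hg0 x.1 x.2 hx
  have hwc := wR_cont
  have hvc := vB_cont p q
  have hic := inv1R_cont
  have hS : Continuous (fun x : ℝ × ℝ => Real.sin (2*x.2)) := by fun_prop
  set κ : ℝ → ℝ := fun β => 2*(1-p)*Real.cos β^2 + 2*(q-1)*Real.sin β^2 with hκ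
  have hκc : Continuous (fun x : ℝ × ℝ => κ x.2) := by simp only [hκ]; fun_prop
  -- the two divergence terms
  set A : ℝ × ℝ → ℝ := fun x => (wR x.1*(1-4/(1+x.1)))*(vB p q x.2*(g x.1 x.2)^2)
    + (x.1*wR x.1)*(vB p q x.2*(2*g x.1 x.2*gR x)) with hA
  set B : ℝ × ℝ → ℝ := fun x => 3/(1+x.1)*(wR x.1*((κ x.2*vB p q x.2)*(g x.1 x.2)^2
    + (Real.sin (2*x.2)*vB p q x.2)*(2*g x.1 x.2*gb x))) with hB
  have hAc : ContinuousOn A Qdom := by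
    have := hic 4
    simp only [hA]; fun_prop
  have hBc : ContinuousOn B Qdom := by
    have := hic 3
    simp only [hB]; fun_prop
  have hA0 : ∀ x, x ∉ K → A x = 0 := fun x hx => by simp [hA, hgz x hx]
  have hB0 : ∀ x, x ∉ K → B x = 0 := fun x hx => by simp [hB, hgz x hx]
  have hAi := cs_int hK hKQ hAc hA0
  have hBi := cs_int hK hKQ hBc hB0
  have hAz : ∫ x in Qdom, A x = 0 := by
    apply int_dR_zero (G := fun x => (x.1 * wR x.1) * (vB p q x.2 * (g x.1 x.2)^2)) hK hKQ
      (fun x hx => by simp [hgz x hx]) hA0 (by fun_prop) hAc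
    intro x hx
    have := (RwR_deriv (show 0 < x.1 from hx.1)).mul
      (((hasDerivAt_R hgd x.1 x.2).pow 2).const_mul (vB p q x.2))
    refine HasDerivAt.congr_deriv this ?_
    simp only [hA, hgR, Pi.pow_apply]
    push_cast
    ring
  have hBz : ∫ x in Qdom, B x = 0 := by
    apply int_dbeta_zero (G := fun x => 3/(1+x.1) * (wR x.1 *
      ((Real.sin (2*x.2) * vB p q x.2) * (g x.1 x.2)^2))) hK hKQ
      (fun x hx => by simp [hgz x hx]) hB0 (by have := hic 3; fun_prop) hBc
    intro x hx
    have := (((svB_deriv (p := p) (q := q) hx.2).mul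
      ((hasDerivAt_beta hgd x.1 x.2).pow 2)).const_mul (wR x.1)).const_mul (3/(1+x.1))
    refine HasDerivAt.congr_deriv this ?_
    simp only [hB, hκ, hgb, Pi.pow_apply]
    push_cast
    ring
  -- the energy density
  set N : ℝ × ℝ → ℝ := fun x => (g x.1 x.2)^2 * (wR x.1 * vB p q x.2) with hN
  have hNc : ContinuousOn N Qdom := by simp only [hN]; fun_prop
  have hN0 : ∀ x, x ∉ K → N x = 0 := fun x hx => by simp [hN, hgz x hx]
  have hNi := cs_int hK hKQ hNc hN0
  have hQm : MeasurableSet Qdom := Q_open.measurableSet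
  have hψ0 : ∀ x ∈ Qdom, 0 < ψ x.1 x.2 := fun x hx => by
    rw [hψ x hx]; exact mul_pos (wR_pos hx.1) (vB_pos hx.2)
  have hnorm : (norm2 (fun R β => g R β * Real.sqrt (ψ R β)))^2 = ∫ x in Qdom, N x := by
    have hEq : Set.EqOn (fun x : ℝ × ℝ => (g x.1 x.2 * Real.sqrt (ψ x.1 x.2)) *
        (g x.1 x.2 * Real.sqrt (ψ x.1 x.2))) N Qdom := by
      intro x hx
      have := Real.mul_self_sqrt (hψ0 x hx).le
      simp only [hN, ← hψ x hx]
      linear_combination (g x.1 x.2)^2 * this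
    have h1 : inner2 (fun R β => g R β * Real.sqrt (ψ R β)) (fun R β => g R β * Real.sqrt (ψ R β))
        = ∫ x in Qdom, N x := by
      unfold inner2
      rw [setInt_Q (f := fun R β => (g R β * Real.sqrt (ψ R β)) * (g R β * Real.sqrt (ψ R β)))
        (hNi.integrableOn.congr_fun hEq.symm hQm)]
      exact setIntegral_congr_fun hQm hEq
    unfold norm2
    rw [h1, Real.sq_sqrt]
    refine setIntegral_nonneg hQm fun x hx => ?_
    exact mul_nonneg (sq_nonneg _) (mul_pos (wR_pos hx.1) (vB_pos hx.2)).le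
  -- the left-hand side
  set J : ℝ × ℝ → ℝ := fun x => (-(x.1*gR x) - 3/(1+x.1)*(Real.sin (2*x.2) * gb x)
    + (-2 - 3/(1+x.1))*g x.1 x.2 + F x.1 x.2) * (g x.1 x.2 * (wR x.1 * vB p q x.2)) with hJ
  have hJc : ContinuousOn J Qdom := by
    have := hic 3
    simp only [hJ]; fun_prop
  have hJ0 : ∀ x, x ∉ K → J x = 0 := fun x hx => by simp [hJ, hgz x hx]
  have hJi := cs_int hK hKQ hJc hJ0
  have hlhs : inner2 E (fun R β => g R β * ψ R β) = ∫ x in Qdom, J x := by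
    have hEq : Set.EqOn (fun x : ℝ × ℝ => E x.1 x.2 * (g x.1 x.2 * ψ x.1 x.2)) J Qdom := by
      intro x hx
      simp only [hJ, hE x hx, hψ x hx, hDR x, hDb x]
    unfold inner2
    rw [setInt_Q (f := fun R β => E R β * (g R β * ψ R β))
      (hJi.integrableOn.congr_fun hEq.symm hQm)]
    exact setIntegral_congr_fun hQm hEq
  rw [hlhs, hnorm]
  have hmono : ∫ x in Qdom, J x ≤ ∫ x in Qdom, (((-(1/2) * A x + -(1/2) * B x) + -(1/2) * N x)
      + (1/4) * b x) := by
    apply setIntegral_mono_on hJi.integrableOn _ hQm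
    · intro x hx
      have hw := wR_pos (show 0 < x.1 from hx.1)
      have hv := vB_pos (p := p) (q := q) hx.2
      have hx1 : 0 < x.1 := hx.1
      have hk : κ x.2 ≤ 1 := by
        simp only [hκ]
        nlinarith [Real.sin_sq_add_cos_sq x.2, sq_nonneg (Real.sin x.2), sq_nonneg (Real.cos x.2)]
      have := energy_alg (R := x.1) (g := g x.1 x.2) (gR := gR x) (gb := gb x)
        (S := Real.sin (2*x.2)) (F := F x.1 x.2) (ρ := 1/(1+x.1)) hw hv hk (by positivity)
      have e3 : 3/(1+x.1) = 3*(1/(1+x.1)) := by ring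
      have e4 : 4/(1+x.1) = 4*(1/(1+x.1)) := by ring
      have hbx := hFb x hx
      simp only [hJ, hA, hB, hN, e3, e4]
      linarith
    · exact (((hAi.integrableOn.const_mul _).add (hBi.integrableOn.const_mul _)).add
        (hNi.integrableOn.const_mul _)).add (hb.const_mul _)
  refine hmono.trans (le_of_eq ?_)
  have iA : IntegrableOn (fun x => -(1/2) * A x) Qdom := hAi.integrableOn.const_mul _
  have iB : IntegrableOn (fun x => -(1/2) * B x) Qdom := hBi.integrableOn.const_mul _
  have iN : IntegrableOn (fun x => -(1/2) * N x) Qdom := hNi.integrableOn.const_mul _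
  have ib : IntegrableOn (fun x => (1/4) * b x) Qdom := hb.const_mul _
  have iAB : IntegrableOn (fun x => -(1/2) * A x + -(1/2) * B x) Qdom := iA.add iB
  have iABN : IntegrableOn (fun x => -(1/2) * A x + -(1/2) * B x + -(1/2) * N x) Qdom :=
    iAB.add iN
  rw [integral_add iABN ib, integral_add iAB iN, integral_add iA iB,
    integral_const_mul, integral_const_mul, integral_const_mul, integral_const_mul, hAz, hBz]
  ring


/-! ### The nonlocal term -/

/-- Angular average in the nonlocal term. -/
def hav (Ω : ℝ → ℝ → ℝ) (s : ℝ) : ℝ :=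
  ∫ β in Set.Ioo (0:ℝ) (Real.pi/2), Ω s β * Real.sin (2*β) / s

lemma hav_int {Ω : ℝ → ℝ → ℝ} (hΩ : Continuous (Function.uncurry Ω)) {K : Set (ℝ × ℝ)}
    (hK : IsCompact K) (hKQ : K ⊆ Qdom) (h0 : ∀ x y : ℝ, (x, y) ∉ K → Ω x y = 0) :
    Integrable (hav Ω) := by
  have hΩ' : Continuous (fun x : ℝ × ℝ => Ω x.1 x.2) := hΩ
  have hi : Integrable (fun x : ℝ × ℝ => Ω x.1 x.2 * Real.sin (2*x.2) / x.1) := by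
    apply cs_int hK hKQ
    · exact ContinuousOn.div (by fun_prop) (by fun_prop)
        fun x hx => (show 0 < x.1 from hx.1).ne'
    · intro x hx
      simp [h0 x.1 x.2 hx]
  have hi2 : Integrable (fun x : ℝ × ℝ => Ω x.1 x.2 * Real.sin (2*x.2) / x.1)
      ((volume : Measure ℝ).prod (volume.restrict (Set.Ioo (0:ℝ) (Real.pi/2)))) := by
    rw [Measure.volume_eq_prod] at hi
    have := hi.integrableOn (s := Set.univ ×ˢ Set.Ioo (0:ℝ) (Real.pi/2))
    rw [IntegrableOn, ← Measure.prod_restrict, Measure.restrict_univ] at this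
    exact this
  exact hi2.integral_prod_left

lemma tL12_eq {Ω : ℝ → ℝ → ℝ} (hi : Integrable (hav Ω)) (R : ℝ) :
    tL12 Ω R = - ∫ s in (0:ℝ)..R, hav Ω s := by
  rw [← intervalIntegral.integral_Ioi_sub_Ioi' hi.integrableOn hi.integrableOn]
  unfold tL12 L12 hav
  ring

lemma tL12_cont {Ω : ℝ → ℝ → ℝ} (hi : Integrable (hav Ω)) : Continuous (tL12 Ω) := by
  have : tL12 Ω = fun R => - ∫ s in (0:ℝ)..R, hav Ω s := funext (tL12_eq hi)
  rw [this]
  exact (intervalIntegral.continuous_primitive (fun a b => hi.intervalIntegrable) 0).neg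

lemma L12_bound {Ω : ℝ → ℝ → ℝ} (hi : Integrable (hav Ω)) (R : ℝ) :
    |L12 Ω R| ≤ ∫ s, |hav Ω s| := by
  have h1 : |L12 Ω R| ≤ ∫ s in Set.Ioi R, |hav Ω s| := by
    have := norm_integral_le_integral_norm (μ := volume.restrict (Set.Ioi R)) (hav Ω)
    simp only [Real.norm_eq_abs] at this
    exact this
  exact h1.trans (setIntegral_le_integral hi.abs
    (Filter.Eventually.of_forall fun x => abs_nonneg _))

lemma exists_eps {K : Set (ℝ × ℝ)} (hK : IsCompact K) (hKQ : K ⊆ Qdom) :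
    ∃ ε : ℝ, 0 < ε ∧ ∀ x ∈ K, ε ≤ x.1 := by
  rcases K.eq_empty_or_nonempty with h | h
  · exact ⟨1, one_pos, by simp [h]⟩
  · obtain ⟨x, hx, hm⟩ := hK.exists_isMinOn h (f := Prod.fst) continuous_fst.continuousOn
    exact ⟨x.1, (hKQ hx).1, fun y hy => hm hy⟩

lemma tL12_sq_int {Ω : ℝ → ℝ → ℝ} (hi : Integrable (hav Ω)) {K : Set (ℝ × ℝ)}
    (hK : IsCompact K) (hKQ : K ⊆ Qdom) (h0 : ∀ x y : ℝ, (x, y) ∉ K → Ω x y = 0) :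
    IntegrableOn (fun R => (tL12 Ω R / R)^2) (Set.Ioi 0) := by
  obtain ⟨ε, hε, hmin⟩ := exists_eps hK hKQ
  set M := ∫ s, |hav Ω s| with hM
  have hM0 : 0 ≤ M := integral_nonneg fun x => abs_nonneg _
  have hz : ∀ R, 0 < R → R < ε → tL12 Ω R = 0 := by
    intro R hR hRe
    rw [tL12_eq hi, neg_eq_zero]
    apply intervalIntegral.integral_zero_ae
    refine Filter.Eventually.of_forall fun s hs => ?_
    rw [Set.uIoc_of_le hR.le] at hs
    have : ∀ b, Ω s b = 0 := fun b => h0 s b fun h => by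
      have := hmin _ h
      simp only at this
      linarith [hs.2]
    simp [hav, this]
  have hdom : IntegrableOn (fun R : ℝ => ((2*M)^2 * (1 + (ε^2)⁻¹)) * (1+R^2)⁻¹) (Set.Ioi 0) :=
    (integrable_inv_one_add_sq.const_mul _).integrableOn
  refine Integrable.mono' hdom ?_ ?_
  · refine ContinuousOn.aestronglyMeasurable ?_ measurableSet_Ioi
    exact ((tL12_cont hi).continuousOn.div continuousOn_id
      fun x hx => (show (0:ℝ) < x from hx).ne').pow 2
  · refine (ae_restrict_iff' measurableSet_Ioi).2 (Filter.Eventually.of_forall fun R hR => ?_)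
    have hR : 0 < R := hR
    rw [Real.norm_eq_abs, abs_of_nonneg (sq_nonneg _)]
    by_cases h : R < ε
    · rw [hz R hR h]; rw [show (0/R)^2 = (0:ℝ) by simp]
      positivity
    · push Not at h
      have h1 : |tL12 Ω R| ≤ 2*M := by
        unfold tL12
        refine (abs_sub _ _).trans ?_
        linarith [L12_bound hi R, L12_bound hi 0]
      have h2 : (tL12 Ω R)^2 ≤ (2*M)^2 := by
        rw [← sq_abs]; exact pow_le_pow_left₀ (abs_nonneg _) h1 2
      have h3 : (R^2)⁻¹ ≤ (1 + (ε^2)⁻¹) * (1+R^2)⁻¹ := by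
        rw [← div_eq_mul_inv, inv_eq_one_div, div_le_div_iff₀ (by positivity) (by positivity)]
        have : 1 ≤ (ε^2)⁻¹ * R^2 := by
          rw [inv_mul_eq_div, le_div_iff₀ (by positivity)]
          nlinarith
        nlinarith
      rw [div_pow, div_eq_mul_inv, mul_assoc]
      exact mul_le_mul h2 h3 (by positivity) (by positivity)

/-! ### The angular majorant -/

/-- Angular majorant. -/
def mB (β : ℝ) : ℝ := (Real.sin β * Real.cos β) ^ (-(249/250 : ℝ))

lemma sc_lower {β : ℝ} (hβ : β ∈ Set.Ioo (0:ℝ) (Real.pi/2)) :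
    β/4 ≤ Real.sin β * Real.cos β ∨ (Real.pi/2 - β)/4 ≤ Real.sin β * Real.cos β := by
  have e : Real.sin β * Real.cos β = Real.sin (2*β) / 2 := by rw [Real.sin_two_mul]; ring
  have hpi := Real.pi_pos
  have h12 : 1/2 ≤ 2/Real.pi := by
    rw [div_le_div_iff₀ (by norm_num) hpi]; linarith [Real.pi_lt_four]
  rw [e]
  rcases le_total β (Real.pi/4) with h | h
  · left
    have := Real.mul_le_sin (x := 2*β) (by linarith [hβ.1]) (by linarith)
    nlinarith [hβ.1]
  · right
    have := Real.mul_le_sin (x := Real.pi - 2*β) (by linarith [hβ.2]) (by linarith)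
    rw [Real.sin_pi_sub] at this
    nlinarith [hβ.2]

lemma mB_int : IntegrableOn mB (Set.Ioo (0:ℝ) (Real.pi/2)) := by
  have hpi := Real.pi_pos
  have i1 : IntervalIntegrable (fun x : ℝ => x ^ (-(249/250:ℝ))) volume 0 (Real.pi/2) :=
    intervalIntegral.intervalIntegrable_rpow' (by norm_num)
  have i2 : IntervalIntegrable (fun x : ℝ => (Real.pi/2 - x) ^ (-(249/250:ℝ))) volume
      0 (Real.pi/2) := by
    have := (i1.comp_sub_left (Real.pi/2)).symm
    simpa using this
  rw [intervalIntegrable_iff_integrableOn_Ioo_of_le (by positivity)] at i1 i2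
  have i3 := (i1.add i2).const_mul ((1/4:ℝ) ^ (-(249/250:ℝ)))
  refine Integrable.mono' i3 ?_ ?_
  · refine ContinuousOn.aestronglyMeasurable ?_ measurableSet_Ioo
    unfold mB
    exact ContinuousOn.rpow_const (by fun_prop)
      fun x hx => Or.inl (mul_pos (sin_pos_Q hx) (cos_pos_Q hx)).ne'
  · refine (ae_restrict_iff' measurableSet_Ioo).2 (Filter.Eventually.of_forall fun β hβ => ?_)
    have hsc := mul_pos (sin_pos_Q hβ) (cos_pos_Q hβ)
    have hb1 : 0 < β := hβ.1
    have hb2 : 0 < Real.pi/2 - β := by linarith [hβ.2]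
    rw [Real.norm_eq_abs, abs_of_nonneg (show 0 ≤ mB β from Real.rpow_nonneg hsc.le _)]
    have p1 := Real.rpow_nonneg hb1.le (-(249/250:ℝ))
    have p2 := Real.rpow_nonneg hb2.le (-(249/250:ℝ))
    have p3 : (0:ℝ) ≤ (1/4:ℝ) ^ (-(249/250:ℝ)) := by positivity
    show (Real.sin β * Real.cos β) ^ (-(249/250:ℝ)) ≤ (1/4:ℝ) ^ (-(249/250:ℝ)) *
      (β ^ (-(249/250:ℝ)) + (Real.pi/2 - β) ^ (-(249/250:ℝ)))
    rcases sc_lower hβ with h | h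
    · have h1 := Real.rpow_le_rpow_of_nonpos (by positivity) h
        (show -(249/250:ℝ) ≤ 0 by norm_num)
      rw [show β/4 = 1/4*β by ring, Real.mul_rpow (by norm_num) hb1.le] at h1
      nlinarith
    · have h1 := Real.rpow_le_rpow_of_nonpos (by positivity) h
        (show -(249/250:ℝ) ≤ 0 by norm_num)
      rw [show (Real.pi/2 - β)/4 = 1/4*(Real.pi/2 - β) by ring,
        Real.mul_rpow (by norm_num) hb2.le] at h1
      nlinarith

lemma mB_nonneg {β : ℝ} (hβ : β ∈ Set.Ioo (0:ℝ) (Real.pi/2)) : 0 ≤ mB β :=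
  Real.rpow_nonneg (mul_pos (sin_pos_Q hβ) (cos_pos_Q hβ)).le _

lemma sing_bound {α β p q e : ℝ} (h1 : α ≤ 1/1000) (hp : p = 99/100)
    (hq : q - e ≤ 249/250) (hβ : β ∈ Set.Ioo (0:ℝ) (Real.pi/2)) :
    (((Real.sin β ^ α)^3)⁻¹)^2 * (Real.cos β ^ e * vB p q β) ≤ mB β := by
  have hs := sin_pos_Q hβ
  have hc := cos_pos_Q hβ
  have e1 : (((Real.sin β ^ α)^3)⁻¹)^2 = Real.sin β ^ (-(6*α)) := by
    rw [Real.rpow_neg hs.le, inv_pow, ← pow_mul, ← Real.rpow_natCast, ← Real.rpow_mul hs.le]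
    congr 2; push_cast; ring
  have e2 : (((Real.sin β ^ α)^3)⁻¹)^2 * (Real.cos β ^ e * vB p q β)
      = Real.sin β ^ (-(6*α) + -p) * Real.cos β ^ (e + -q) := by
    rw [e1, vB, Real.rpow_add hs, Real.rpow_add hc]; ring
  rw [e2, mB, Real.mul_rpow hs.le hc.le]
  refine mul_le_mul ?_ ?_ (by positivity) (by positivity)
  · exact Real.rpow_le_rpow_of_exponent_ge hs (Real.sin_le_one β) (by linarith)
  · exact Real.rpow_le_rpow_of_exponent_ge hc (Real.cos_le_one β) (by linarith)

/-- Absolute constant. -/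
def Mm : ℝ := ∫ β in Set.Ioo (0:ℝ) (Real.pi/2), mB β

lemma Mm_nonneg : 0 ≤ Mm := setIntegral_nonneg measurableSet_Ioo fun _ h => mB_nonneg h

/-- Pointwise bound on the weighted square of a profile. -/
lemma prof_bound {α p q e X R β : ℝ} (h1 : α ≤ 1/1000) (hp : p = 99/100)
    (hq : q - 2*e ≤ 249/250) (hR : 0 < R) (hβ : β ∈ Set.Ioo (0:ℝ) (Real.pi/2))
    (hX : |X| ≤ 1000*α^2*(Real.cos β ^ e * (R^2/(1+R)^3 * ((Real.sin β ^ α)^3)⁻¹))) :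
    X^2 * (wR R * vB p q β) ≤ 10^6*α^4*(((1+R)^2)⁻¹ * mB β) := by
  have hs := sin_pos_Q hβ
  have hc := cos_pos_Q hβ
  have hv := vB_pos (p := p) (q := q) hβ
  have hw := wR_pos hR
  have h2 : X^2 ≤ (1000*α^2*(Real.cos β ^ e * (R^2/(1+R)^3 * ((Real.sin β ^ α)^3)⁻¹)))^2 := by
    rw [← sq_abs]; exact pow_le_pow_left₀ (abs_nonneg _) hX 2
  have h3 := sing_bound (α := α) (e := 2*e) h1 hp hq hβ
  have e3 : Real.cos β ^ (2*e) = (Real.cos β ^ e)^2 := by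
    rw [mul_comm, Real.rpow_mul hc.le]; norm_cast
  have e4 : (R^2/(1+R)^3)^2 * wR R = ((1+R)^2)⁻¹ := by
    unfold wR; field_simp
  calc X^2 * (wR R * vB p q β) ≤ _ * (wR R * vB p q β) :=
        mul_le_mul_of_nonneg_right h2 (by positivity)
    _ = 10^6*α^4*(((R^2/(1+R)^3)^2 * wR R) *
        ((((Real.sin β ^ α)^3)⁻¹)^2 * (Real.cos β ^ (2*e) * vB p q β))) := by
        rw [e3]; ring
    _ ≤ _ := by
        rw [e4]
        gcongr


/-! ### Combination of the energy identity and the nonlocal bounds -/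

lemma F_sq {α T L X Y : ℝ} (hα : 0 < α) :
    (-(2/(Real.pi*α)) * T * X + (-(2/(Real.pi*α)) * L) * Y)^2
      ≤ (α^2)⁻¹ * (T^2*X^2 + L^2*Y^2) := by
  have hpi := Real.pi_gt_three
  have h1 : (2/(Real.pi*α))^2 * 2 ≤ (α^2)⁻¹ := by
    rw [div_pow, mul_pow, inv_eq_one_div, div_mul_eq_mul_div,
      div_le_div_iff₀ (by positivity) (by positivity)]
    have : 8 ≤ Real.pi^2 := by nlinarith
    have h2 : 0 < α^2 := by positivity
    nlinarith
  have h2 : (T*X + L*Y)^2 ≤ 2*(T^2*X^2 + L^2*Y^2) := by nlinarith [sq_nonneg (T*X - L*Y)]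
  have h3 : 0 ≤ T^2*X^2 + L^2*Y^2 := by positivity
  calc _ = (2/(Real.pi*α))^2 * (T*X + L*Y)^2 := by ring
    _ ≤ (2/(Real.pi*α))^2 * (2*(T^2*X^2 + L^2*Y^2)) :=
        mul_le_mul_of_nonneg_left h2 (by positivity)
    _ = ((2/(Real.pi*α))^2 * 2) * (T^2*X^2 + L^2*Y^2) := by ring
    _ ≤ _ := mul_le_mul_of_nonneg_right h1 h3

lemma combine {α p q : ℝ} (hα : 0 < α) (h1 : α ≤ 1/1000) (hp : 1/2 ≤ p) (hq : q ≤ 3/2)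
    {Ω g X Y E ψ : ℝ → ℝ → ℝ} (hΩ : Continuous (Function.uncurry Ω)) (hΩs : suppIn Ω)
    (hg : ContDiff ℝ 1 (Function.uncurry g)) {K : Set (ℝ × ℝ)} (hK : IsCompact K)
    (hKQ : K ⊆ Qdom) (hg0 : ∀ x y : ℝ, (x, y) ∉ K → g x y = 0)
    (hX : ContinuousOn (fun x : ℝ × ℝ => X x.1 x.2) Qdom)
    (hY : ContinuousOn (fun x : ℝ × ℝ => Y x.1 x.2) Qdom)
    (bX : ∀ x ∈ Qdom, (X x.1 x.2)^2 * (wR x.1 * vB p q x.2)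
      ≤ 10^6*α^4*(((1+x.1)^2)⁻¹ * mB x.2))
    (bY : ∀ x ∈ Qdom, (Y x.1 x.2)^2 * (wR x.1 * vB p q x.2)
      ≤ 10^6*α^4*(((1+x.1)^2)⁻¹ * mB x.2))
    (hE : ∀ x ∈ Qdom, E x.1 x.2 = -DR g x.1 x.2 - (3/(1+x.1))*Dbeta g x.1 x.2
      + (-2-3/(1+x.1))*g x.1 x.2
      - (2/(Real.pi*α)) * tL12 Ω x.1 * X x.1 x.2 + cω α Ω * Y x.1 x.2)
    (hψ : ∀ x ∈ Qdom, ψ x.1 x.2 = wR x.1 * vB p q x.2) :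
    inner2 E (fun R β => g R β * ψ R β)
      ≤ (-(1/3) + (500000*Mm)*α) * (norm2 (fun R β => g R β * Real.sqrt (ψ R β)))^2
        + (500000*Mm)*α * ((L12 Ω 0)^2 + (normR (fun R => tL12 Ω R / R))^2) := by
  obtain ⟨K', hK', hKQ', h0'⟩ := hΩs
  have hi := hav_int hΩ hK' hKQ' h0'
  have hT := tL12_sq_int hi hK' hKQ' h0'
  have hI : IntegrableOn (fun R : ℝ => (1+R^2)⁻¹) (Set.Ioi 0) :=
    integrable_inv_one_add_sq.integrableOn
  set L := L12 Ω 0 with hL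
  set A : ℝ → ℝ := fun R => 10^6*α^2*((tL12 Ω R / R)^2 + L^2*(1+R^2)⁻¹) with hA
  have hAi : IntegrableOn A (Set.Ioi 0) := (hT.add (hI.const_mul _)).const_mul _
  have hb : IntegrableOn (fun x : ℝ × ℝ => A x.1 * mB x.2) Qdom := by
    have := Integrable.mul_prod (f := A) (g := mB) hAi mB_int
    rw [Measure.prod_restrict, ← Measure.volume_eq_prod] at this
    exact this
  have hF : ContinuousOn (fun x : ℝ × ℝ =>
      (fun R β => -(2/(Real.pi*α)) * tL12 Ω R * X R β + cω α Ω * Y R β) x.1 x.2) Qdom := by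
    have := (tL12_cont hi).comp continuous_fst (X := ℝ × ℝ)
    exact ((continuousOn_const.mul this.continuousOn).mul hX).add (continuousOn_const.mul hY)
  have hFb : ∀ x ∈ Qdom, ((fun R β => -(2/(Real.pi*α)) * tL12 Ω R * X R β
      + cω α Ω * Y R β) x.1 x.2)^2 * (wR x.1 * vB p q x.2) ≤ A x.1 * mB x.2 := by
    rintro ⟨R, β⟩ hx
    have hR : 0 < R := hx.1
    have hβ := hx.2
    have hm := mB_nonneg hβ
    have hw := wR_pos hR
    have hv := vB_pos (p := p) (q := q) hβ
    have b1 := bX _ hx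
    have b2 := bY _ hx
    simp only at hβ hm hv b1 b2 ⊢
    have hwv := mul_pos hw hv
    have i1 : ((1+R)^2)⁻¹ ≤ (R^2)⁻¹ := inv_anti₀ (by positivity) (by nlinarith)
    have i2 : ((1+R)^2)⁻¹ ≤ (1+R^2)⁻¹ := inv_anti₀ (by positivity) (by nlinarith)
    have i3 := mul_le_mul_of_nonneg_right i1 hm
    have i4 := mul_le_mul_of_nonneg_right i2 hm
    have hF2 := F_sq (T := tL12 Ω R) (L := L) (X := X R β) (Y := Y R β) hα
    calc _ ≤ ((α^2)⁻¹ * ((tL12 Ω R)^2*(X R β)^2 + L^2*(Y R β)^2)) * (wR R * vB p q β) :=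
          mul_le_mul_of_nonneg_right hF2 hwv.le
      _ = (α^2)⁻¹ * ((tL12 Ω R)^2*((X R β)^2 * (wR R * vB p q β))
          + L^2*((Y R β)^2 * (wR R * vB p q β))) := by ring
      _ ≤ (α^2)⁻¹ * ((tL12 Ω R)^2*(10^6*α^4*((R^2)⁻¹ * mB β))
          + L^2*(10^6*α^4*((1+R^2)⁻¹ * mB β))) := by
          have j1 : 10^6*α^4*(((1+R)^2)⁻¹ * mB β) ≤ 10^6*α^4*((R^2)⁻¹ * mB β) :=
            mul_le_mul_of_nonneg_left i3 (by positivity)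
          have j2 : 10^6*α^4*(((1+R)^2)⁻¹ * mB β) ≤ 10^6*α^4*((1+R^2)⁻¹ * mB β) :=
            mul_le_mul_of_nonneg_left i4 (by positivity)
          have k1 := mul_le_mul_of_nonneg_left (b1.trans j1) (sq_nonneg (tL12 Ω R))
          have k2 := mul_le_mul_of_nonneg_left (b2.trans j2) (sq_nonneg L)
          exact mul_le_mul_of_nonneg_left (add_le_add k1 k2) (by positivity)
      _ = _ := by
          simp only [hA]
          field_simp
  have hE' : ∀ x ∈ Qdom, E x.1 x.2 = -DR g x.1 x.2 - (3/(1+x.1))*Dbeta g x.1 x.2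
      + (-2-3/(1+x.1))*g x.1 x.2 + (fun R β => -(2/(Real.pi*α)) * tL12 Ω R * X R β
      + cω α Ω * Y R β) x.1 x.2 := by
    intro x hx
    rw [hE x hx]
    ring
  have key := energy (F := fun R β => -(2/(Real.pi*α)) * tL12 Ω R * X R β + cω α Ω * Y R β)
    (E := E) (ψ := ψ) hp hq hg hK hKQ hg0 hF hb hFb hE' hψ
  have hInt : ∫ x in Qdom, A x.1 * mB x.2
      = (10^6*α^2*((normR (fun R => tL12 Ω R / R))^2 + L^2*(Real.pi/2))) * Mm := by
    have e1 : (normR (fun R => tL12 Ω R / R))^2 = ∫ R in Set.Ioi (0:ℝ), (tL12 Ω R / R)^2 :=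
      Real.sq_sqrt (integral_nonneg fun _ => sq_nonneg _)
    have e2 : ∫ R in Set.Ioi (0:ℝ), (1+R^2)⁻¹ = Real.pi/2 := by
      rw [integral_Ioi_inv_one_add_sq]; simp
    have e3 : ∫ R in Set.Ioi (0:ℝ), A R
        = 10^6*α^2*((normR (fun R => tL12 Ω R / R))^2 + L^2*(Real.pi/2)) := by
      simp only [hA]
      rw [integral_const_mul, integral_add hT (hI.const_mul _), integral_const_mul, e1, e2]
    rw [← e3, Measure.volume_eq_prod]
    exact setIntegral_prod_mul A mB _ _
  rw [hInt] at key
  have hM := Mm_nonneg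
  set N := (normR (fun R => tL12 Ω R / R))^2 with hN
  have hN0 : 0 ≤ N := sq_nonneg _
  set n := (norm2 (fun R β => g R β * Real.sqrt (ψ R β)))^2 with hn
  have hn0 : 0 ≤ n := sq_nonneg _
  have hL0 : 0 ≤ L^2 := sq_nonneg _
  have hpi : Real.pi/2 ≤ 2 := by linarith [Real.pi_lt_four]
  have s1 : N + L^2*(Real.pi/2) ≤ 2*(L^2+N) := by nlinarith
  have s2 : α^2 ≤ α := by nlinarith
  have s3 : (1/4)*((10^6*α^2*(N + L^2*(Real.pi/2)))*Mm) ≤ (500000*Mm)*α*(L^2+N) := by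
    calc _ = 250000*Mm*(α^2*(N + L^2*(Real.pi/2))) := by ring
      _ ≤ 250000*Mm*(α*(2*(L^2+N))) := by
          refine mul_le_mul_of_nonneg_left ?_ (by positivity)
          exact mul_le_mul s2 s1 (by positivity) hα.le
      _ = _ := by ring
  have s4 : -(1/2)*n ≤ (-(1/3) + (500000*Mm)*α)*n := by
    have : 0 ≤ (500000*Mm)*α*n := by positivity
    nlinarith
  linarith

/-! ### Derivatives and bounds for the profile -/

lemma xibar_DR {α R β : ℝ} (hα : 0 < α) (hR : 0 < R) (hβ : β ∈ Set.Ioo (0:ℝ) (Real.pi/2)) :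
    DR (ξbar α) R β = -(18*α^2 / cst α) * XX α l1 R β := by
  have h1 : HasDerivAt (fun r => ξbar α r β) (-(18*α^2 / cst α) * (R⁻¹ * XX α l1 R β)) R := by
    refine ((XX_DR hα l0_deriv l1_cont l1_M hR).const_mul
      (-(18*α^2 / cst α))).congr_of_eventuallyEq ?_
    filter_upwards [isOpen_Ioi.mem_nhds (show R ∈ Set.Ioi (0:ℝ) from hR)] with r hr
    exact xibar_eq hα hr hβ
  unfold DR
  rw [h1.deriv]
  field_simp

/-- The angular derivative of `XX`. -/
def YY (α : ℝ) (l l' : ℝ → ℝ) (R β : ℝ) : ℝ :=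
  2*α*Real.cos β^2*XX α l' R β
    - 2*Real.sin β*Real.cos β*(Real.cos β ^ α * l (Real.log R))

lemma YY_eq {α : ℝ} (l l' : ℝ → ℝ) {R β : ℝ} (hβ : β ∈ Set.Ioo (0:ℝ) (Real.pi/2)) :
    Real.sin (2*β) * (α * (Real.cos β / Real.sin β) * XX α l' R β
      - Real.cos β ^ α * l (Real.log R)) = YY α l l' R β := by
  have hs := sin_pos_Q hβ
  rw [Real.sin_two_mul]
  unfold YY
  field_simp

lemma YY_cont {α : ℝ} (h : 0 < α) {l l' : ℝ → ℝ} (hl : Continuous l) (hl' : Continuous l') :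
    ContinuousOn (fun p : ℝ × ℝ => YY α l l' p.1 p.2) Qdom := by
  unfold YY
  have h1 : ContinuousOn (fun p : ℝ × ℝ => Real.log p.1) Qdom :=
    ContinuousOn.log continuousOn_fst fun p hp => (show 0 < p.1 from hp.1).ne'
  have h2 : ContinuousOn (fun p : ℝ × ℝ => Real.cos p.2 ^ α) Qdom :=
    ContinuousOn.rpow_const (by fun_prop) fun x hx => Or.inl (cos_pos_Q hx.2).ne'
  have h3 := hl.comp_continuousOn h1
  have h4 := XX_cont h hl'
  exact (ContinuousOn.mul (by fun_prop) h4).sub (ContinuousOn.mul (by fun_prop) (h2.mul h3))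

lemma YY_bound {α : ℝ} (hα : 0 < α) (h1 : α ≤ 1/1000) {l l' : ℝ → ℝ} {N : ℝ}
    (hN : 0 ≤ N) (hl : ∀ t, |l t| ≤ N * h0 (Real.exp t))
    (hl' : ∀ t, |l' t| ≤ 6 * h0 (Real.exp t)) {R β : ℝ} (hR : 0 < R)
    (hβ : β ∈ Set.Ioo (0:ℝ) (Real.pi/2)) :
    |YY α l l' R β| ≤ (2*N+1) *
      (Real.cos β * (R^2/(1+R)^3 * ((Real.sin β ^ α)^3)⁻¹)) := by
  have hs := sin_pos_Q hβ
  have hc := cos_pos_Q hβ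
  have hs1 := Real.sin_le_one β
  have hc1 := Real.cos_le_one β
  have b1 := XX_bound hα (by norm_num : (0:ℝ) ≤ 6) hl' hR hβ
  have hsa : 0 < Real.sin β ^ α := Real.rpow_pos_of_pos hs _
  have hsa1 : Real.sin β ^ α ≤ 1 := Real.rpow_le_one hs.le hs1 hα.le
  have hca : 0 < Real.cos β ^ α := Real.rpow_pos_of_pos hc _
  have hca1 : Real.cos β ^ α ≤ 1 := Real.rpow_le_one hc.le hc1 hα.le
  have b2 := h0_bound (u := R) hsa hsa1 hR (by nlinarith) le_rfl
  have b3 := hl (Real.log R)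
  rw [Real.exp_log hR] at b3
  set B := R^2/(1+R)^3 * ((Real.sin β ^ α)^3)⁻¹ with hB
  have hB0 : 0 ≤ B := by positivity
  have b4 : |l (Real.log R)| ≤ N * B := b3.trans (mul_le_mul_of_nonneg_left b2 hN)
  unfold YY
  refine (abs_sub _ _).trans ?_
  have t1 : |2*α*Real.cos β^2*XX α l' R β| ≤ Real.cos β * B := by
    rw [abs_mul, abs_of_nonneg (by positivity)]
    calc _ ≤ 2*α*Real.cos β^2*(2*6*B) := mul_le_mul_of_nonneg_left b1 (by positivity)
      _ = (24*α*Real.cos β)*(Real.cos β*B) := by ring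
      _ ≤ 1*(Real.cos β*B) := by
          refine mul_le_mul_of_nonneg_right ?_ (by positivity)
          nlinarith
      _ = _ := one_mul _
  have t2 : |2*Real.sin β*Real.cos β*(Real.cos β ^ α * l (Real.log R))|
      ≤ 2*N*(Real.cos β * B) := by
    rw [abs_mul, abs_mul (Real.cos β ^ α), abs_of_nonneg (show 0 ≤ 2*Real.sin β*Real.cos β by
      positivity), abs_of_pos hca]
    have u1 : Real.cos β ^ α * |l (Real.log R)| ≤ 1 * (N*B) :=
      mul_le_mul hca1 b4 (abs_nonneg _) zero_le_one
    have u2 : 2*Real.sin β*Real.cos β ≤ 2*Real.cos β := by nlinarith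
    calc _ ≤ 2*Real.cos β*(1*(N*B)) := mul_le_mul u2 u1 (by positivity) (by positivity)
      _ = _ := by ring
  linarith

lemma l1_b6 (t : ℝ) : |l1 t| ≤ 6 * h0 (Real.exp t) :=
  (l1_b t).trans (by linarith [h0_nonneg (Real.exp_pos t)])

/-- Abbreviation-free bound for scalar combinations. -/
lemma comb_bound {α k x y B a b : ℝ} (hk : |k| ≤ 60*α^2) (hx : |x| ≤ a*B) (hy : |y| ≤ b*B)
    (hB : 0 ≤ B) (hab : 3*a + b ≤ 16) : |3*(k*x) - k*y| ≤ 1000*α^2*B := by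
  have e : 3*(k*x) - k*y = k*(3*x - y) := by ring
  have h1 : |3*x - y| ≤ 16*B := by
    refine (abs_sub _ _).trans ?_
    rw [abs_mul, abs_of_pos (by norm_num : (0:ℝ) < 3)]
    nlinarith
  rw [e, abs_mul]
  calc _ ≤ (60*α^2)*(16*B) := mul_le_mul hk h1 (abs_nonneg _) (by positivity)
    _ ≤ _ := by
      have : 0 ≤ α^2*B := by positivity
      nlinarith

lemma comb_bound1 {α k x B a : ℝ} (hk : |k| ≤ 60*α^2) (hx : |x| ≤ a*B)
    (hB : 0 ≤ B) (ha : a ≤ 16) : |k*x| ≤ 1000*α^2*B := by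
  have h1 : |x| ≤ 16*B := by nlinarith
  rw [abs_mul]
  calc _ ≤ (60*α^2)*(16*B) := mul_le_mul hk h1 (abs_nonneg _) (by positivity)
    _ ≤ _ := by
      have : 0 ≤ α^2*B := by positivity
      nlinarith

/-! ### The first estimate -/

lemma part1 {α : ℝ} (hα : 0 < α) (h1 : α ≤ 1/1000) {Ω ξ : ℝ → ℝ → ℝ}
    (hΩ : ContDiff ℝ 2 (Function.uncurry Ω)) (hξ : ContDiff ℝ 2 (Function.uncurry ξ))
    (hΩs : suppIn Ω) (hξs : suppIn ξ) :
    inner2 (opL3 α Ω ξ) (fun R β => ξ R β * psi1 R β)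
      ≤ (-(1/3) + (500000*Mm)*α) * (norm2 (fun R β => ξ R β * Real.sqrt (psi1 R β)))^2
        + (500000*Mm)*α * ((L12 Ω 0)^2 + (normR (fun R => tL12 Ω R / R))^2) := by
  obtain ⟨K, hK, hKQ, h0⟩ := hξs
  have hk := K_bound hα h1
  refine combine (p := 99/100) (q := 99/100) (X := fun R β => -(18*α^2 / cst α) * XX α l0 R β)
    (Y := fun R β => 3*(-(18*α^2 / cst α) * XX α l0 R β) - -(18*α^2 / cst α) * XX α l1 R β)
    hα h1 (by norm_num) (by norm_num) hΩ.continuous hΩs (hξ.of_le (by norm_num)) hK hKQ h0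
    ?_ ?_ ?_ ?_ ?_ ?_
  · exact continuousOn_const.mul (XX_cont hα l0_cont)
  · exact (continuousOn_const.mul (continuousOn_const.mul (XX_cont hα l0_cont))).sub
      (continuousOn_const.mul (XX_cont hα l1_cont))
  · rintro ⟨R, β⟩ hx
    have hR : 0 < R := hx.1
    have hβ : β ∈ Set.Ioo (0:ℝ) (Real.pi/2) := hx.2
    have hs := sin_pos_Q hβ
    refine prof_bound (e := 0) h1 rfl (by norm_num) hR hβ ?_
    rw [Real.rpow_zero, one_mul]
    exact comb_bound1 hk (XX_bound hα zero_le_one l0_b hR hβ) (by positivity) (by norm_num)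
  · rintro ⟨R, β⟩ hx
    have hR : 0 < R := hx.1
    have hβ : β ∈ Set.Ioo (0:ℝ) (Real.pi/2) := hx.2
    have hs := sin_pos_Q hβ
    refine prof_bound (e := 0) h1 rfl (by norm_num) hR hβ ?_
    rw [Real.rpow_zero, one_mul]
    exact comb_bound hk (XX_bound hα zero_le_one l0_b hR hβ)
      (XX_bound hα zero_le_two l1_b hR hβ) (by positivity) (by norm_num)
  · rintro ⟨R, β⟩ hx
    have hR : 0 < R := hx.1
    have hβ : β ∈ Set.Ioo (0:ℝ) (Real.pi/2) := hx.2
    simp only [opL3, xibar_DR hα hR hβ, xibar_eq hα hR hβ]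
  · rintro ⟨R, β⟩ hx
    have hβ : β ∈ Set.Ioo (0:ℝ) (Real.pi/2) := hx.2
    simp only [psi1, wR, vB]
    rw [Real.mul_rpow (sin_pos_Q hβ).le (cos_pos_Q hβ).le]

/-! ### The second estimate -/

lemma part2 {α : ℝ} (hα : 0 < α) (h1 : α ≤ 1/1000) {Ω ξ : ℝ → ℝ → ℝ}
    (hΩ : ContDiff ℝ 2 (Function.uncurry Ω)) (hξ : ContDiff ℝ 2 (Function.uncurry ξ))
    (hΩs : suppIn Ω) (hξs : suppIn ξ) :
    inner2 (Dbeta (opL3 α Ω ξ)) (fun R β => Dbeta ξ R β * psi2 α R β)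
      ≤ (-(1/3) + (500000*Mm)*α) * (norm2 (fun R β => Dbeta ξ R β * Real.sqrt (psi2 α R β)))^2
        + (500000*Mm)*α * ((L12 Ω 0)^2 + (normR (fun R => tL12 Ω R / R))^2) := by
  obtain ⟨K, hK, hKQ, h0⟩ := hξs
  have hk := K_bound hα h1
  have hd : Differentiable ℝ (Function.uncurry ξ) := hξ.differentiable (by norm_num)
  have hDξ : ContDiff ℝ 1 (fderiv ℝ (Function.uncurry ξ)) :=
    hξ.fderiv_right (by norm_num)
  have hdir : ∀ v : ℝ × ℝ, ContDiff ℝ 1 (fun p => fderiv ℝ (Function.uncurry ξ) p v) :=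
    fun v => hDξ.clm_apply contDiff_const
  have hgeq : Dbeta ξ = fun R β => Real.sin (2*β) * fderiv ℝ (Function.uncurry ξ) (R, β) (0, 1) := by
    funext R β
    unfold Dbeta
    rw [(hasDerivAt_beta hd R β).deriv]
  have hReq : DR ξ = fun R β => R * fderiv ℝ (Function.uncurry ξ) (R, β) (1, 0) := by
    funext R β
    unfold DR
    rw [(hasDerivAt_R hd R β).deriv]
  have hg : ContDiff ℝ 1 (Function.uncurry (Dbeta ξ)) := by
    rw [hgeq]
    have : ContDiff ℝ 1 (fun p : ℝ × ℝ => Real.sin (2*p.2)) := by fun_prop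
    exact this.mul (hdir (0, 1))
  have hg0 : ∀ x y : ℝ, (x, y) ∉ K → Dbeta ξ x y = 0 := by
    intro x y hxy
    rw [hgeq]
    simp [fderiv_zero hK h0 hxy]
  have hgd : Differentiable ℝ (Function.uncurry (Dbeta ξ)) := hg.differentiable (by norm_num)
  refine combine (p := 99/100) (q := 1 + α/10)
    (X := fun R β => -(18*α^2 / cst α) * YY α l0 l1 R β)
    (Y := fun R β => 3*(-(18*α^2 / cst α) * YY α l0 l1 R β) - -(18*α^2 / cst α) * YY α l1 l2 R β)
    hα h1 (by norm_num) (by linarith) hΩ.continuous hΩs hg hK hKQ hg0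
    ?_ ?_ ?_ ?_ ?_ ?_
  · exact continuousOn_const.mul (YY_cont hα l0_cont l1_cont)
  · exact (continuousOn_const.mul (continuousOn_const.mul (YY_cont hα l0_cont l1_cont))).sub
      (continuousOn_const.mul (YY_cont hα l1_cont l2_cont))
  · rintro ⟨R, β⟩ hx
    have hR : 0 < R := hx.1
    have hβ : β ∈ Set.Ioo (0:ℝ) (Real.pi/2) := hx.2
    have hs := sin_pos_Q hβ
    have hc := cos_pos_Q hβ
    refine prof_bound (e := 1) h1 rfl (by linarith) hR hβ ?_
    rw [Real.rpow_one]
    exact comb_bound1 hk (YY_bound hα h1 zero_le_one l0_b l1_b6 hR hβ) (by positivity)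
      (by norm_num)
  · rintro ⟨R, β⟩ hx
    have hR : 0 < R := hx.1
    have hβ : β ∈ Set.Ioo (0:ℝ) (Real.pi/2) := hx.2
    have hs := sin_pos_Q hβ
    have hc := cos_pos_Q hβ
    refine prof_bound (e := 1) h1 rfl (by linarith) hR hβ ?_
    rw [Real.rpow_one]
    exact comb_bound hk (YY_bound hα h1 zero_le_one l0_b l1_b6 hR hβ)
      (YY_bound hα h1 zero_le_two l1_b l2_b hR hβ) (by positivity) (by norm_num)
  · rintro ⟨R, β⟩ hx
    have hR : 0 < R := hx.1
    have hβ : β ∈ Set.Ioo (0:ℝ) (Real.pi/2) := hx.2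
    simp only
    set k := -(18*α^2 / cst α) with hkdef
    set f1 : ℝ → ℝ → ℝ := fun r b => fderiv ℝ (Function.uncurry ξ) (r, b) (1, 0) with hf1
    set f2 : ℝ → ℝ → ℝ := fun r b => fderiv ℝ (Function.uncurry ξ) (r, b) (0, 1) with hf2
    have hDd : DifferentiableAt ℝ (fderiv ℝ (Function.uncurry ξ)) (R, β) :=
      hDξ.differentiable (by norm_num) _
    have d1 : HasDerivAt (fun b => f1 R b)
        (fderiv ℝ (fderiv ℝ (Function.uncurry ξ)) (R, β) (0, 1) (1, 0)) β := by
      have := hDd.hasFDerivAt.comp_hasDerivAt (f := fun b : ℝ => (R, b)) β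
        ((hasDerivAt_const β R).prodMk (hasDerivAt_id β))
      simpa using this.clm_apply (hasDerivAt_const β ((1:ℝ), (0:ℝ)))
    have d2 : HasDerivAt (fun r => f2 r β)
        (fderiv ℝ (fderiv ℝ (Function.uncurry ξ)) (R, β) (1, 0) (0, 1)) R := by
      have := hDd.hasFDerivAt.comp_hasDerivAt (f := fun r : ℝ => (r, β)) R
        ((hasDerivAt_id R).prodMk (hasDerivAt_const R β))
      simpa using this.clm_apply (hasDerivAt_const R ((0:ℝ), (1:ℝ)))
    have hsym : fderiv ℝ (fderiv ℝ (Function.uncurry ξ)) (R, β) (1, 0) (0, 1)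
        = fderiv ℝ (fderiv ℝ (Function.uncurry ξ)) (R, β) (0, 1) (1, 0) :=
      (hξ.contDiffAt (x := (R, β))).isSymmSndFDerivAt (by simp) _ _
    have dg : HasDerivAt (fun b => Dbeta ξ R b)
        (deriv (fun b => Dbeta ξ R b) β) β :=
      (hasDerivAt_beta hgd R β).differentiableAt.hasDerivAt
    have dx : HasDerivAt (fun b => ξ R b) (f2 R β) β := hasDerivAt_beta hd R β
    have dX0 := XX_Dbeta hα l0_deriv l1_cont l1_M (R := R) hβ
    have dX1 := XX_Dbeta hα l1_deriv l2_cont l2_M (R := R) hβ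
    have dtot := ((((d1.const_mul R).neg.sub (dg.const_mul (3/(1+R)))).add
      (dx.const_mul (-2 - 3/(1+R)))).sub
      ((dX0.const_mul k).const_mul ((2/(Real.pi*α)) * tL12 Ω R))).add
      ((((dX0.const_mul k).const_mul 3).sub (dX1.const_mul k)).const_mul (cω α Ω))
    have dop := dtot.congr_of_eventuallyEq (f₁ := fun b => opL3 α Ω ξ R b) (by
      filter_upwards [isOpen_Ioo.mem_nhds hβ] with b hb
      simp only [opL3, xibar_DR hα hR hb, xibar_eq hα hR hb, hReq, Pi.add_apply, Pi.sub_apply,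
        Pi.neg_apply, hf1, hkdef])
    have e1 := congrArg (fun t => Real.sin (2*β) * t) dop.deriv
    change Dbeta (opL3 α Ω ξ) R β = _ at e1
    have e2 : DR (Dbeta ξ) R β = R * (Real.sin (2*β) *
        fderiv ℝ (fderiv ℝ (Function.uncurry ξ)) (R, β) (0, 1) (1, 0)) := by
      have : HasDerivAt (fun r => Dbeta ξ r β) (Real.sin (2*β) *
          fderiv ℝ (fderiv ℝ (Function.uncurry ξ)) (R, β) (0, 1) (1, 0)) R := by
        rw [hgeq, ← hsym]
        exact d2.const_mul _
      rw [DR, this.deriv]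
    have e3 : Dbeta (Dbeta ξ) R β = Real.sin (2*β) * deriv (fun b => Dbeta ξ R b) β := rfl
    have e4 : Dbeta ξ R β = Real.sin (2*β) * f2 R β := by rw [hgeq]
    rw [e1, e2, e3, ← YY_eq l0 l1 hβ, ← YY_eq l1 l2 hβ]
    conv_rhs => rw [e4]
    ring
  · rintro ⟨R, β⟩ hx
    simp only [psi2, wR, vB]
    ring

/-- weighted `L²` estimates of `ξ` and `D_β ξ`. -/
theorem weighted_L2_estimate_xi :
    ∃ C : ℝ, ∀ α : ℝ, 0 < α → α ≤ 1/1000 →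
      ∀ Ω ξ : ℝ → ℝ → ℝ,
        ContDiff ℝ 2 (Function.uncurry Ω) → ContDiff ℝ 2 (Function.uncurry ξ) →
        suppIn Ω → suppIn ξ →
        (inner2 (opL3 α Ω ξ) (fun R β => ξ R β * psi1 R β)
            ≤ (-(1/3) + C*α) * (norm2 (fun R β => ξ R β * Real.sqrt (psi1 R β)))^2
              + C*α * ((L12 Ω 0)^2 + (normR (fun R => tL12 Ω R / R))^2)) ∧
        (inner2 (Dbeta (opL3 α Ω ξ)) (fun R β => Dbeta ξ R β * psi2 α R β)
            ≤ (-(1/3) + C*α) * (norm2 (fun R β => Dbeta ξ R β * Real.sqrt (psi2 α R β)))^2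
              + C*α * ((L12 Ω 0)^2 + (normR (fun R => tL12 Ω R / R))^2)) := by
  exact ⟨500000*Mm, fun α hα h1 Ω ξ hΩ hξ hΩs hξs =>
    ⟨part1 hα h1 hΩ hξ hΩs hξs, part2 hα h1 hΩ hξ hΩs hξs⟩⟩

end Paper
end
end

section
/- Let Ω be continuous with compact support contained in (0,∞)×(0,π/2), let k ∈ [3/2, 4] and λ > 0. Then ⟨sin(2β) Ω L̃₁₂(Ω), R^{−k}⟩ = −((k−1)/2) ‖L̃₁₂(Ω) R^{−k/2}‖²_{L²(R)}, and ⟨(sin(2β) Ω + λ L̃₁₂(Ω))², R^{−k}⟩ = ⟨R^{−k} sin(2β)², Ω²⟩ − ((k−1)λ − (π/2)λ²) ‖L̃₁₂(Ω) R^{−k/2}‖²_{L²(R)}. -/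
open Real MeasureTheory Set

noncomputable section

namespace Paper

theorem aux_int {k a : ℝ} (hk : 1 < k) (ha : 0 < a) (φ : ℝ → ℝ) (hφ : Continuous φ)
    (C : ℝ) (hC : ∀ x, ‖φ x‖ ≤ C) (h0 : ∀ x, x ≤ a → φ x = 0) :
    IntegrableOn (fun R => φ R * R ^ (-k)) (Ioi 0) := by
  have h1 : IntegrableOn (fun R : ℝ => R ^ (-k)) (Ioi a) :=
    integrableOn_Ioi_rpow_of_lt (by linarith) ha
  have h2 : IntegrableOn (fun R => φ R * R ^ (-k)) (Ioi a) :=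
    Integrable.bdd_mul h1 hφ.aestronglyMeasurable (Filter.Eventually.of_forall hC)
  refine h2.of_forall_sdiff_eq_zero measurableSet_Ioi ?_
  intro x hx
  have : x ≤ a := by simpa using hx.2
  simp [h0 x this]

theorem aux_bdd {a b : ℝ} (φ : ℝ → ℝ) (hφ : Continuous φ)
    (h0 : ∀ x, x ∉ Icc a b → φ x = 0) : HasCompactSupport φ ∧ ∃ C, ∀ x, ‖φ x‖ ≤ C := by
  have h : HasCompactSupport φ := HasCompactSupport.intro isCompact_Icc h0
  exact ⟨h, h.exists_bound_of_continuous hφ⟩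

theorem aux_supp (Ω : ℝ → ℝ → ℝ) (hs : suppIn Ω) :
    ∃ a b : ℝ, 0 < a ∧ ∀ x, x ∉ Icc a b → ∀ y, Ω x y = 0 := by
  obtain ⟨K, hK, hKQ, h0⟩ := hs
  have hI : IsCompact (Prod.fst '' K) := hK.image continuous_fst
  obtain ⟨b, hb⟩ := hI.bddAbove
  have : ∃ a : ℝ, 0 < a ∧ ∀ x ∈ Prod.fst '' K, a ≤ x := by
    rcases (Prod.fst '' K).eq_empty_or_nonempty with h | h
    · exact ⟨1, one_pos, by simp [h]⟩
    · obtain ⟨a, ha, hm⟩ := hI.exists_isLeast h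
      obtain ⟨p, hp, rfl⟩ := ha
      exact ⟨p.1, (hKQ hp).1, fun x hx => hm hx⟩
  obtain ⟨a, ha, hm⟩ := this
  refine ⟨a, b, ha, fun x hx y => h0 x y fun hxy => hx ?_⟩
  have : x ∈ Prod.fst '' K := ⟨_, hxy, rfl⟩
  exact ⟨hm x this, hb this⟩

theorem aux_Ioo (f : ℝ → ℝ) :
    ∫ β in Ioo (0:ℝ) (Real.pi/2), f β = ∫ β in (0:ℝ)..(Real.pi/2), f β := by
  rw [intervalIntegral.integral_of_le (by positivity), integral_Ioc_eq_integral_Ioo]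

theorem aux_main (k a b : ℝ) (hk : 1 < k) (ha : 0 < a) (g T : ℝ → ℝ) (hg : Continuous g)
    (h0 : ∀ x, x ∉ Icc a b → g x = 0)
    (hT : ∀ R, T R = (∫ s in Ioi R, g s / s) - ∫ s in Ioi (0:ℝ), g s / s) :
    Continuous T ∧ (∀ x, x ≤ a → T x = 0) ∧ (∃ C, ∀ x, ‖T x‖ ≤ C) ∧
    ∫ R in Ioi (0:ℝ), g R * T R * R ^ (-k) = -((k-1)/2) * ∫ R in Ioi (0:ℝ), T R ^ 2 * R ^ (-k) := by
  have hlt : ∀ x, x < a → g x = 0 := fun x hx => h0 x (fun h => absurd h.1 (not_le.2 hx))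
  have hheq : (fun s => g s / s) = fun s => g s / max s a := by
    funext s
    rcases lt_or_ge s a with h | h
    · simp [hlt s h]
    · rw [max_eq_left h]
  set h : ℝ → ℝ := fun s => g s / s with hh
  have hcont : Continuous h := by
    rw [hheq]
    exact hg.div (by fun_prop) (fun s => (lt_of_lt_of_le ha (le_max_right _ _)).ne')
  have hh0 : ∀ x, x ∉ Icc a b → h x = 0 := fun x hx => by simp [hh, h0 x hx]
  have hint : Integrable h := hcont.integrable_of_hasCompactSupport (aux_bdd h hcont hh0).1
  have hT' : ∀ R, T R = -∫ s in (0:ℝ)..R, h s := by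
    intro R
    rw [hT, ← intervalIntegral.integral_Ioi_sub_Ioi' hint.integrableOn hint.integrableOn]
    ring
  have hTd : ∀ R, HasDerivAt T (-h R) R := by
    intro R
    rw [show T = fun R => -∫ s in (0:ℝ)..R, h s from funext hT']
    exact (hcont.integral_hasStrictDerivAt 0 R).hasDerivAt.neg
  have hTc : Continuous T := continuous_iff_continuousAt.2 fun R => (hTd R).continuousAt
  have hT0 : ∀ x, x ≤ a → T x = 0 := by
    have : ∀ x, x < a → T x = 0 := by
      intro x hx
      rw [hT', neg_eq_zero]
      apply intervalIntegral.integral_zero_ae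
      refine Filter.Eventually.of_forall fun s hs => ?_
      have : s ≤ max 0 x := (uIoc_subset_uIcc hs).2
      have : s < a := lt_of_le_of_lt this (max_lt ha hx)
      simp [hh, hlt s this]
    intro x hx
    have hcl : IsClosed {x | T x = 0} := isClosed_eq hTc continuous_const
    have : closure (Iio a) ⊆ {x | T x = 0} := hcl.closure_subset_iff.2 this
    rw [closure_Iio] at this
    exact this hx
  have hTb : ∃ C, ∀ x, ‖T x‖ ≤ C := by
    refine ⟨∫ s, ‖h s‖, fun x => ?_⟩
    rw [hT', norm_neg]
    refine (intervalIntegral.norm_integral_le_integral_norm_uIoc).trans ?_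
    exact setIntegral_le_integral hint.norm (Filter.Eventually.of_forall fun _ => norm_nonneg _)
  refine ⟨hTc, hT0, hTb, ?_⟩
  obtain ⟨C, hC⟩ := hTb
  obtain ⟨D, hD⟩ := (aux_bdd g hg h0).2
  have hC0 : 0 ≤ C := (norm_nonneg _).trans (hC 0)
  have hI1 : IntegrableOn (fun R => g R * T R * R ^ (-k)) (Ioi 0) := by
    refine aux_int hk ha (fun R => g R * T R) (hg.mul hTc) (D * C) (fun x => ?_) ?_
    · rw [norm_mul]
      exact mul_le_mul (hD x) (hC x) (norm_nonneg _) ((norm_nonneg _).trans (hD x))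
    · intro x hx; simp [hT0 x hx]
  have hI2 : IntegrableOn (fun R => T R ^ 2 * R ^ (-k)) (Ioi 0) := by
    refine aux_int hk ha (fun R => T R ^ 2) (hTc.pow 2) (C ^ 2) (fun x => ?_) ?_
    · rw [norm_pow]
      exact pow_le_pow_left₀ (norm_nonneg _) (hC x) 2
    · intro x hx; simp [hT0 x hx]
  have hI3 : IntegrableOn (fun R => (-2) * (g R * T R * R ^ (-k)) + (1 - k) * (T R ^ 2 * R ^ (-k)))
      (Ioi 0) := (hI1.const_mul (-2)).add (hI2.const_mul (1 - k))
  have key := integral_Ioi_of_hasDerivAt_of_tendsto (a := 0) (m := 0)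
    (f := fun R => T R ^ 2 * R ^ (1 - k))
    (f' := fun R => (-2) * (g R * T R * R ^ (-k)) + (1 - k) * (T R ^ 2 * R ^ (-k)))
    ?_ ?_ hI3 ?_
  · rw [integral_add (hI1.const_mul _) (hI2.const_mul _), integral_const_mul,
      integral_const_mul] at key
    simp only [hT0 0 ha.le] at key
    norm_num at key
    linarith
  · apply ContinuousAt.continuousWithinAt
    have : (fun R => T R ^ 2 * R ^ (1 - k)) =ᶠ[nhds 0] fun _ => 0 := by
      filter_upwards [Iio_mem_nhds ha] with x hx
      simp [hT0 x (le_of_lt hx)]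
    exact continuousAt_const.congr this.symm
  · intro x hx
    have hx' : 0 < x := hx
    have h1 := ((hTd x).pow 2).mul (Real.hasDerivAt_rpow_const (p := 1 - k) (Or.inl hx'.ne'))
    refine h1.congr_deriv ?_
    have e : x ^ (1 - k) = x * x ^ (-k) := by
      rw [sub_eq_add_neg, Real.rpow_add hx', Real.rpow_one]
    rw [show 1 - k - 1 = -k by ring]
    simp only [hh, Pi.pow_apply, e]
    field_simp
    push_cast
    ring
  · have h1 : Filter.Tendsto (fun R : ℝ => R ^ (1 - k)) Filter.atTop (nhds 0) := by
      have := tendsto_rpow_neg_atTop (y := k - 1) (by linarith)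
      simpa using this
    refine bdd_le_mul_tendsto_zero' (C ^ 2) (Filter.Eventually.of_forall fun x => ?_) h1
    rw [← Real.norm_eq_abs, norm_pow]
    exact pow_le_pow_left₀ (norm_nonneg _) (hC x) 2

/-- cancellation identities between `Ω` and `L̃₁₂(Ω)`. -/
theorem cancellation_tL12
    (Ω : ℝ → ℝ → ℝ) (hc : Continuous (Function.uncurry Ω)) (hs : suppIn Ω)
    (k lam : ℝ) (hk : k ∈ Set.Icc (3/2 : ℝ) 4) (hlam : 0 < lam) :
    inner2 (fun R β => Real.sin (2*β) * Ω R β * tL12 Ω R) (fun R _ => R ^ (-k))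
        = -((k-1)/2) * (normR (fun R => tL12 Ω R * R ^ (-k/2)))^2 ∧
    inner2 (fun R β => (Real.sin (2*β) * Ω R β + lam * tL12 Ω R)^2) (fun R _ => R ^ (-k))
        = inner2 (fun R β => R ^ (-k) * (Real.sin (2*β))^2) (fun R β => (Ω R β)^2)
          - ((k-1)*lam - (Real.pi/2)*lam^2) * (normR (fun R => tL12 Ω R * R ^ (-k/2)))^2 := by
  have hk1 : 1 < k := by linarith [hk.1]
  obtain ⟨a, b, ha, h0⟩ := aux_supp Ω hs
  set T := tL12 Ω with hTdef
  have hc2 : Continuous fun p : ℝ × ℝ => Ω p.1 p.2 := hc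
  have hcR : ∀ R, Continuous (Ω R) := fun R => hc2.comp (by fun_prop : Continuous fun y : ℝ => (R, y))
  let g : ℝ → ℝ := fun R => ∫ β in (0:ℝ)..(Real.pi/2), Real.sin (2*β) * Ω R β
  let q : ℝ → ℝ := fun R => ∫ β in (0:ℝ)..(Real.pi/2), (Real.sin (2*β))^2 * (Ω R β)^2
  have hg : Continuous g := by
    apply intervalIntegral.continuous_parametric_intervalIntegral_of_continuous'
    exact Continuous.mul (by fun_prop) hc2
  have hq : Continuous q := by
    apply intervalIntegral.continuous_parametric_intervalIntegral_of_continuous'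
    exact Continuous.mul (by fun_prop) (hc2.pow 2)
  have hg0 : ∀ x, x ∉ Icc a b → g x = 0 := fun x hx => by simp [g, h0 x hx]
  have hq0 : ∀ x, x ∉ Icc a b → q x = 0 := fun x hx => by simp [q, h0 x hx]
  have hL : ∀ R, L12 Ω R = ∫ s in Ioi R, g s / s := by
    intro R
    unfold L12
    congr 1
    funext s
    rw [aux_Ioo, intervalIntegral.integral_div]
    simp only [g, mul_comm]
  obtain ⟨hTc, hT0, ⟨C, hC⟩, hmain⟩ := aux_main k a b hk1 ha g T hg hg0
    (fun R => by rw [hTdef, tL12, hL, hL])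
  have hq0a : ∀ x, x ≤ a → q x = 0 := by
    intro x hx
    have hcl : IsClosed {x | q x = 0} := isClosed_eq hq continuous_const
    have : closure (Iio a) ⊆ {x | q x = 0} := hcl.closure_subset_iff.2
      fun x hx => hq0 x (fun h => absurd h.1 (not_le.2 hx))
    rw [closure_Iio] at this
    exact this hx
  obtain ⟨D, hD⟩ := (aux_bdd g hg hg0).2
  obtain ⟨E, hE⟩ := (aux_bdd q hq hq0).2
  have hI0 : IntegrableOn (fun R => q R * R ^ (-k)) (Ioi 0) := aux_int hk1 ha q hq E hE hq0a
  have hI1 : IntegrableOn (fun R => g R * T R * R ^ (-k)) (Ioi 0) := by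
    refine aux_int hk1 ha (fun R => g R * T R) (hg.mul hTc) (D * C) (fun x => ?_) ?_
    · rw [norm_mul]
      exact mul_le_mul (hD x) (hC x) (norm_nonneg _) ((norm_nonneg _).trans (hD x))
    · intro x hx; simp [hT0 x hx]
  have hI2 : IntegrableOn (fun R => T R ^ 2 * R ^ (-k)) (Ioi 0) := by
    refine aux_int hk1 ha (fun R => T R ^ 2) (hTc.pow 2) (C ^ 2) (fun x => ?_) ?_
    · rw [norm_pow]
      exact pow_le_pow_left₀ (norm_nonneg _) (hC x) 2
    · intro x hx; simp [hT0 x hx]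
  have hN : (normR (fun R => T R * R ^ (-k/2)))^2 = ∫ R in Ioi (0:ℝ), T R ^ 2 * R ^ (-k) := by
    unfold normR
    rw [Real.sq_sqrt (integral_nonneg fun _ => sq_nonneg _)]
    refine setIntegral_congr_fun measurableSet_Ioi fun x hx => ?_
    have hx' : (0:ℝ) < x := hx
    simp only
    rw [mul_pow, ← Real.rpow_natCast (x ^ (-k/2)), ← Real.rpow_mul hx'.le]
    congr 2
    push_cast
    ring
  have hA : inner2 (fun R β => Real.sin (2*β) * Ω R β * T R) (fun R _ => R ^ (-k))
      = ∫ R in Ioi (0:ℝ), g R * T R * R ^ (-k) := by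
    unfold inner2
    congr 1
    funext R
    rw [aux_Ioo, intervalIntegral.integral_mul_const, intervalIntegral.integral_mul_const]
  have hB : inner2 (fun R β => R ^ (-k) * (Real.sin (2*β))^2) (fun R β => (Ω R β)^2)
      = ∫ R in Ioi (0:ℝ), q R * R ^ (-k) := by
    unfold inner2
    congr 1
    funext R
    rw [aux_Ioo]
    simp only [mul_assoc]
    rw [intervalIntegral.integral_const_mul, mul_comm]
  have hD2 : inner2 (fun R β => (Real.sin (2*β) * Ω R β + lam * T R)^2) (fun R _ => R ^ (-k))
      = ∫ R in Ioi (0:ℝ), (q R * R ^ (-k) + (2 * lam) * (g R * T R * R ^ (-k))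
          + (Real.pi/2 * lam^2) * (T R ^ 2 * R ^ (-k))) := by
    unfold inner2
    congr 1
    funext R
    rw [aux_Ioo, intervalIntegral.integral_mul_const]
    have e : ∀ β, (Real.sin (2*β) * Ω R β + lam * T R)^2
        = (Real.sin (2*β))^2 * (Ω R β)^2 + (2 * lam * T R) * (Real.sin (2*β) * Ω R β)
          + lam^2 * T R^2 := fun β => by ring
    have hcc := hcR R
    have i1 : IntervalIntegrable (fun β => (Real.sin (2*β))^2 * (Ω R β)^2) volume 0 (Real.pi/2) :=
      Continuous.intervalIntegrable (by fun_prop) _ _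
    have i2 : IntervalIntegrable (fun β => (2 * lam * T R) * (Real.sin (2*β) * Ω R β))
        volume 0 (Real.pi/2) :=
      Continuous.intervalIntegrable (by fun_prop) _ _
    simp only [e]
    rw [intervalIntegral.integral_add (i1.add i2) (by simp),
      intervalIntegral.integral_add i1 i2, intervalIntegral.integral_const_mul,
      intervalIntegral.integral_const]
    simp only [q, g, smul_eq_mul]
    ring
  rw [hN, hA, hB, hD2]
  refine ⟨hmain, ?_⟩
  have hI3 : IntegrableOn (fun R => q R * R ^ (-k) + (2 * lam) * (g R * T R * R ^ (-k)))
      (Ioi 0) := hI0.add (hI1.const_mul (2 * lam))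
  rw [integral_add hI3 (hI2.const_mul _),
    integral_add hI0 (hI1.const_mul _), integral_const_mul, integral_const_mul, hmain]
  ring

end Paper
end
end

section
/- Let χ : [0,∞) → [0,1] be a smooth cutoff function with χ(R) = 1 for R ≤ 1 and χ(R) = 0 for R ≥ 2. There is a constant C, depending only on χ, such that for every continuous Ω on (0,∞)×(0,π/2) for which the respective right-hand sides are finite: (i) sup_{R≥0} |L₁₂(Ω)(R)| ≤ C ‖((1+R)/R) Ω‖₂; (ii) ∫_0^∞ L̃₁₂(Ω)(R)² (R^{−2} + R^{−3}) dR ≤ C ‖((1+R)²/R²) Ω‖₂²; (iii) (∫_0^∞ L₁₂(Ω)(R)² dR)^{1/2} ≤ C ‖Ω‖₂; (iv) for k = 1, 2: ‖((1+R)/R)^k (L₁₂(Ω) − L₁₂(Ω)(0) χ)‖_{L²(R)} ≤ C ‖((1+R)/R)^k Ω‖₂. -/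
open Real MeasureTheory Set

noncomputable section

namespace Paper

open scoped ENNReal

lemma cs_sq (μ : Measure ℝ) (f g : ℝ → ℝ≥0∞) (hf : Measurable f) (hg : Measurable g) :
    (∫⁻ s, f s * g s ∂μ)^2 ≤ (∫⁻ s, f s ^2 ∂μ) * (∫⁻ s, g s ^2 ∂μ) := by
  have h := ENNReal.lintegral_mul_le_Lp_mul_Lq μ Real.HolderConjugate.two_two
    hf.aemeasurable hg.aemeasurable
  have h2 := pow_le_pow_left' h 2
  simp only [Pi.mul_apply] at h2
  refine h2.trans (le_of_eq ?_)
  rw [mul_pow, ← ENNReal.rpow_natCast, ← ENNReal.rpow_natCast, ← ENNReal.rpow_mul, ← ENNReal.rpow_mul]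
  norm_num

lemma tonelli_head (W H : ℝ → ℝ≥0∞) (hW : Measurable W) (hH : Measurable H) :
    ∫⁻ R in Ioi (0:ℝ), W R * ∫⁻ s in Ioc 0 R, H s
      = ∫⁻ s in Ioi (0:ℝ), H s * ∫⁻ R in Ici s, W R := by
  have hT : MeasurableSet {p : ℝ × ℝ | 0 < p.2 ∧ p.2 ≤ p.1} :=
    (measurableSet_lt measurable_const measurable_snd).inter
      (measurableSet_le measurable_snd measurable_fst)
  have hm : Measurable (({p : ℝ × ℝ | 0 < p.2 ∧ p.2 ≤ p.1}).indicator
      (fun p => W p.1 * H p.2)) :=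
    ((hW.comp measurable_fst).mul (hH.comp measurable_snd)).indicator hT
  have hsw := lintegral_lintegral_swap (μ := (volume : Measure ℝ)) (ν := (volume : Measure ℝ))
    (f := fun R s => ({p : ℝ × ℝ | 0 < p.2 ∧ p.2 ≤ p.1}).indicator
      (fun p => W p.1 * H p.2) (R, s)) hm.aemeasurable
  convert hsw using 1
  · rw [← lintegral_indicator measurableSet_Ioi]
    congr 1; ext R
    by_cases hR : 0 < R
    · rw [indicator_of_mem (show R ∈ Ioi (0:ℝ) from hR), ← lintegral_const_mul _ hH,
        ← lintegral_indicator measurableSet_Ioc]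
      rfl
    · rw [indicator_of_notMem (show R ∉ Ioi (0:ℝ) from hR)]
      symm
      rw [lintegral_eq_zero_iff' (by fun_prop)]
      refine Filter.Eventually.of_forall fun s => ?_
      apply indicator_of_notMem
      simp only [mem_ofPred_eq]; intro h; linarith
  · rw [← lintegral_indicator measurableSet_Ioi]
    congr 1; ext s
    by_cases hs : 0 < s
    · rw [indicator_of_mem (show s ∈ Ioi (0:ℝ) from hs), ← lintegral_const_mul _ hW,
        ← lintegral_indicator measurableSet_Ici]
      congr 1; ext R
      by_cases h : s ≤ R
      · simp [indicator, hs, h, mul_comm]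
      · simp [indicator, h]
    · rw [indicator_of_notMem (show s ∉ Ioi (0:ℝ) from hs)]
      simp [indicator, hs]

lemma tonelli_tail (W H : ℝ → ℝ≥0∞) (hW : Measurable W) (hH : Measurable H) :
    ∫⁻ R in Ioi (0:ℝ), W R * ∫⁻ s in Ioi R, H s
      = ∫⁻ s in Ioi (0:ℝ), H s * ∫⁻ R in Ioc 0 s, W R := by
  rw [tonelli_head H W hH hW]
  congr 1; ext R
  rw [setLIntegral_congr (Ioi_ae_eq_Ici (a := R))]

lemma lint_tail (a : ℝ) (ha : a < -1) (R : ℝ) (hR : 0 < R) :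
    ∫⁻ s in Ioi R, ENNReal.ofReal (s^a) = ENNReal.ofReal (-R^(a+1)/(a+1)) := by
  rw [← integral_Ioi_rpow_of_lt ha hR, ofReal_integral_eq_lintegral_ofReal]
  · exact integrableOn_Ioi_rpow_of_lt ha hR
  · filter_upwards [self_mem_ae_restrict measurableSet_Ioi] with s hs
    exact rpow_nonneg (hR.le.trans (le_of_lt hs)) _

lemma lint_head (a : ℝ) (ha : -1 < a) (R : ℝ) (hR : 0 < R) :
    ∫⁻ s in Ioc 0 R, ENNReal.ofReal (s^a) = ENNReal.ofReal (R^(a+1)/(a+1)) := by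
  have h := integral_rpow (a := 0) (b := R) (r := a) (Or.inl ha)
  rw [zero_rpow (by linarith), sub_zero, intervalIntegral.integral_of_le hR.le] at h
  rw [← h, ofReal_integral_eq_lintegral_ofReal]
  · exact (intervalIntegral.intervalIntegrable_rpow' ha).1
  · filter_upwards [self_mem_ae_restrict measurableSet_Ioc] with s hs
    exact rpow_nonneg (le_of_lt hs.1) _

lemma enorm_split (F : ℝ → ℝ) (s a : ℝ) (hs : 0 < s) :
    ‖F s / s‖ₑ = ENNReal.ofReal (|F s| * s^(a-1)) * ENNReal.ofReal (s^(-a)) := by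
  rw [← ENNReal.ofReal_mul (by positivity), ← ofReal_norm, norm_div,
    Real.norm_of_nonneg hs.le, norm_eq_abs, mul_assoc, ← rpow_add hs]
  congr 1
  rw [show a - 1 + -a = -1 by ring, rpow_neg_one]; rfl

lemma sq_split (F : ℝ → ℝ) (s a : ℝ) (hs : 0 < s) :
    ENNReal.ofReal (|F s| * s^a)^2 = ENNReal.ofReal (F s ^2 * s^(2*a)) := by
  rw [← ENNReal.ofReal_pow (by positivity), mul_pow, sq_abs, ← rpow_natCast (s^a),
    ← rpow_mul hs.le, mul_comm a]
  norm_num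

lemma sq_split' (s a : ℝ) (hs : 0 < s) :
    ENNReal.ofReal (s^a)^2 = ENNReal.ofReal (s^(2*a)) := by
  have := sq_split (fun _ => 1) s a hs
  simpa using this

lemma cs_split (F : ℝ → ℝ) (hF : Measurable F) (S : Set ℝ) (hS : MeasurableSet S)
    (hS0 : S ⊆ Ioi 0) (a : ℝ) :
    (∫⁻ s in S, ‖F s / s‖ₑ)^2 ≤ (∫⁻ s in S, ENNReal.ofReal (F s ^2 * s^(2*(a-1)))) *
      ∫⁻ s in S, ENNReal.ofReal (s^(2*(-a))) := by
  rw [setLIntegral_congr_fun hS (fun s hs => enorm_split F s a (hS0 hs))]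
  refine (cs_sq _ _ _ (by fun_prop) (by fun_prop)).trans (le_of_eq ?_)
  rw [setLIntegral_congr_fun hS (fun s hs => sq_split F s (a-1) (hS0 hs)),
    setLIntegral_congr_fun hS (fun s hs => sq_split' s (-a) (hS0 hs))]

lemma hardy_tail (F : ℝ → ℝ) (hF : Measurable F) :
    ∫⁻ R in Ioi (0:ℝ), (∫⁻ s in Ioi R, ‖F s / s‖ₑ)^2
      ≤ ENNReal.ofReal 4 * ∫⁻ s in Ioi (0:ℝ), ENNReal.ofReal (F s ^2) := by
  have h1 : ∀ R ∈ Ioi (0:ℝ), (∫⁻ s in Ioi R, ‖F s / s‖ₑ)^2 ≤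
      ENNReal.ofReal (2 * R^(-(1/2):ℝ)) * ∫⁻ s in Ioi R, ENNReal.ofReal (F s ^2 * s^(-(1/2):ℝ)) := by
    intro R hR
    refine (cs_split F hF (Ioi R) measurableSet_Ioi (Ioi_subset_Ioi (le_of_lt hR)) (3/4)).trans ?_
    rw [mul_comm, lint_tail _ (by norm_num) R hR]
    apply le_of_eq
    congr 3 <;> norm_num
    ring
  refine (setLIntegral_mono' measurableSet_Ioi h1).trans ?_
  rw [tonelli_tail _ _ (by fun_prop) (by fun_prop), ← lintegral_const_mul _ (by fun_prop)]
  refine setLIntegral_mono' measurableSet_Ioi fun s hs => ?_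
  have hs0 : (0:ℝ) < s := hs
  simp_rw [ENNReal.ofReal_mul (zero_le_two (α := ℝ))]
  rw [lintegral_const_mul _ (by fun_prop), lint_head _ (by norm_num) s hs,
    ← ENNReal.ofReal_mul (by norm_num), ← ENNReal.ofReal_mul (by positivity),
    ← ENNReal.ofReal_mul (by norm_num)]
  apply le_of_eq; congr 1
  have : s^(-(1/2):ℝ) * s^(-(1/2)+1:ℝ) = 1 := by
    rw [← rpow_add hs0]; norm_num
  linear_combination (4 * F s ^2) * this

lemma hardy_head (F : ℝ → ℝ) (hF : Measurable F) (p : ℝ) (hp : 2 ≤ p) :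
    ∫⁻ R in Ioi (0:ℝ), ENNReal.ofReal (R^(-p)) * (∫⁻ s in Ioc 0 R, ‖F s / s‖ₑ)^2
      ≤ ENNReal.ofReal 4 * ∫⁻ s in Ioi (0:ℝ), ENNReal.ofReal (s^(-p) * F s ^2) := by
  have h1 : ∀ R ∈ Ioi (0:ℝ), ENNReal.ofReal (R^(-p)) * (∫⁻ s in Ioc 0 R, ‖F s / s‖ₑ)^2 ≤
      ENNReal.ofReal (2 * R^(1/2-p:ℝ)) * ∫⁻ s in Ioc 0 R, ENNReal.ofReal (F s ^2 * s^(-(3/2):ℝ)) := by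
    intro R hR
    have hR0 : (0:ℝ) < R := hR
    refine (mul_le_mul_right (cs_split F hF (Ioc 0 R) measurableSet_Ioc Ioc_subset_Ioi_self (1/4)) _).trans ?_
    rw [mul_comm (lintegral _ _), lint_head _ (by norm_num) R hR, ← mul_assoc,
      ← ENNReal.ofReal_mul (by positivity)]
    apply le_of_eq
    congr 2
    · rw [← mul_div_assoc, ← rpow_add hR0]
      norm_num
      rw [show -p + 1/2 = 1/2 - p by ring]; ring
    · norm_num
  refine (setLIntegral_mono' measurableSet_Ioi h1).trans ?_
  rw [tonelli_head _ _ (by fun_prop) (by fun_prop), ← lintegral_const_mul _ (by fun_prop)]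
  refine setLIntegral_mono' measurableSet_Ioi fun s hs => ?_
  have hs0 : (0:ℝ) < s := hs
  simp_rw [ENNReal.ofReal_mul (zero_le_two (α := ℝ))]
  rw [lintegral_const_mul _ (by fun_prop), ← setLIntegral_congr (Ioi_ae_eq_Ici (a := s)),
    lint_tail _ (by linarith) s hs,
    ← ENNReal.ofReal_mul (by norm_num), ← ENNReal.ofReal_mul (by positivity),
    ← ENNReal.ofReal_mul (by norm_num)]
  apply ENNReal.ofReal_le_ofReal
  have : s^(-(3/2):ℝ) * s^(1/2-p+1:ℝ) = s^(-p) := by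
    rw [← rpow_add hs0]; congr 1; ring
  have e : F s ^ 2 * s ^ (-(3 / 2):ℝ) * (2 * (-s ^ (1 / 2 - p + 1) / (1 / 2 - p + 1)))
     = (2/(p-3/2)) * (s^(-p) * F s ^2) := by
    rw [← this]
    have h1 : p - 3/2 ≠ 0 := by linarith
    have h2 : 1/2 - p + 1 = -(p-3/2) := by ring
    rw [h2, neg_div_neg_eq]; field_simp
  rw [e]
  apply mul_le_mul_of_nonneg_right _ (by positivity)
  rw [div_le_iff₀ (by linarith)]; linarith

lemma sup_bound (F : ℝ → ℝ) (hF : Measurable F) :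
    (∫⁻ s in Ioi (0:ℝ), ‖F s / s‖ₑ)^2
      ≤ ∫⁻ s in Ioi (0:ℝ), ENNReal.ofReal (((1+s)/s)^2 * F s ^2) := by
  have h0 : ∀ s ∈ Ioi (0:ℝ), ‖F s / s‖ₑ
      = ENNReal.ofReal ((1+s)/s * |F s|) * ENNReal.ofReal ((1+s)⁻¹) := by
    intro s hs
    have hs0 : (0:ℝ) < s := hs
    rw [← ENNReal.ofReal_mul (by positivity), ← ofReal_norm, norm_div,
      Real.norm_of_nonneg hs0.le, norm_eq_abs]
    congr 1; field_simp
  rw [setLIntegral_congr_fun measurableSet_Ioi h0]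
  refine (cs_sq _ _ _ (by fun_prop) (by fun_prop)).trans ?_
  have h1 : ∫⁻ s in Ioi (0:ℝ), ENNReal.ofReal ((1+s)⁻¹)^2 ≤ 1 := by
    have := lint_tail (-2) (by norm_num) 1 one_pos
    have h2 := (measurePreserving_add_left volume (1:ℝ)).setLIntegral_comp_preimage_emb
      (measurableEmbedding_addLeft 1) (fun s => ENNReal.ofReal (s^(-2:ℝ))) (Ioi 1)
    rw [this] at h2
    norm_num at h2
    rw [← h2]
    refine setLIntegral_mono' measurableSet_Ioi fun s hs => ?_
    have hs0 : (0:ℝ) < s := hs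
    rw [← ENNReal.ofReal_pow (by positivity), ← rpow_natCast, ← rpow_neg_one, ← rpow_mul (by positivity)]
    norm_num
  refine (mul_le_mul_right h1 _).trans ?_
  rw [mul_one]
  refine setLIntegral_mono' measurableSet_Ioi fun s hs => ?_
  have hs0 : (0:ℝ) < s := hs
  rw [← ENNReal.ofReal_pow (by positivity), mul_pow, sq_abs]

lemma hardy_head_nat (F : ℝ → ℝ) (hF : Measurable F) (n : ℕ) (hn : 2 ≤ n) :
    ∫⁻ R in Ioi (0:ℝ), ENNReal.ofReal ((R^n)⁻¹) * (∫⁻ s in Ioc 0 R, ‖F s / s‖ₑ)^2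
      ≤ ENNReal.ofReal 4 * ∫⁻ s in Ioi (0:ℝ), ENNReal.ofReal ((s^n)⁻¹ * F s ^2) := by
  have h := hardy_head F hF n (by exact_mod_cast hn)
  have e : ∀ s ∈ Ioi (0:ℝ), s^(-(n:ℝ)) = (s^n)⁻¹ := fun s hs => by
    rw [rpow_neg (le_of_lt hs), rpow_natCast]
  have e1 : ∫⁻ R in Ioi (0:ℝ), ENNReal.ofReal (R^(-(n:ℝ))) * (∫⁻ s in Ioc 0 R, ‖F s / s‖ₑ)^2
      = ∫⁻ R in Ioi (0:ℝ), ENNReal.ofReal ((R^n)⁻¹) * (∫⁻ s in Ioc 0 R, ‖F s / s‖ₑ)^2 :=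
    setLIntegral_congr_fun measurableSet_Ioi (fun s hs => by simp only [e s hs])
  have e2 : ∫⁻ s in Ioi (0:ℝ), ENNReal.ofReal (s^(-(n:ℝ)) * F s ^2)
      = ∫⁻ s in Ioi (0:ℝ), ENNReal.ofReal ((s^n)⁻¹ * F s ^2) :=
    setLIntegral_congr_fun measurableSet_Ioi (fun s hs => by simp only [e s hs])
  rw [e1, e2] at h
  exact h

/-- Angular average. -/
def Fav (Ω : ℝ → ℝ → ℝ) (s : ℝ) : ℝ :=
  ∫ β in Set.Ioo (0:ℝ) (Real.pi/2), Ω s β * Real.sin (2*β)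

lemma L12_eq (Ω : ℝ → ℝ → ℝ) (R : ℝ) : L12 Ω R = ∫ s in Ioi R, Fav Ω s / s := by
  unfold L12 Fav
  simp_rw [integral_div]

lemma Fav_meas (Ω : ℝ → ℝ → ℝ) (hΩ : Continuous (Function.uncurry Ω)) : Measurable (Fav Ω) := by
  have : StronglyMeasurable (Function.uncurry fun s β => Ω s β * Real.sin (2*β)) := by
    apply Continuous.stronglyMeasurable
    exact hΩ.mul (by fun_prop)
  exact (this.integral_prod_right (ν := volume.restrict (Set.Ioo (0:ℝ) (Real.pi/2)))).measurable

lemma cont_int (f : ℝ → ℝ) (hf : Continuous f) : IntegrableOn f (Set.Ioo (0:ℝ) (Real.pi/2)) :=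
  (hf.continuousOn.integrableOn_Icc).mono_set Ioo_subset_Icc_self

lemma Fav_sq (Ω : ℝ → ℝ → ℝ) (hΩ : Continuous (Function.uncurry Ω)) (s : ℝ) :
    Fav Ω s ^ 2 ≤ 2 * ∫ β in Set.Ioo (0:ℝ) (Real.pi/2), (Ω s β)^2 := by
  have hc : Continuous (Ω s) := hΩ.comp (by fun_prop : Continuous fun β : ℝ => (s, β))
  set c := Fav Ω s with hcdef
  have h0 : 0 ≤ ∫ β in Set.Ioo (0:ℝ) (Real.pi/2),
      ((Ω s β)^2 - c * (Ω s β * Real.sin (2*β)) + c^2/4 * (Real.sin (2*β))^2) := by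
    apply integral_nonneg
    intro β
    have := sq_nonneg (Ω s β - c/2 * Real.sin (2*β))
    simp only [Pi.zero_apply]
    linarith
  rw [integral_add (cont_int _ (by fun_prop)) (cont_int _ (by fun_prop)),
    integral_sub (cont_int _ (by fun_prop)) (cont_int _ (by fun_prop)),
    integral_const_mul, integral_const_mul] at h0
  have hB : ∫ β in Set.Ioo (0:ℝ) (Real.pi/2), (Real.sin (2*β))^2 ≤ 2 := by
    have : ∫ β in Set.Ioo (0:ℝ) (Real.pi/2), (Real.sin (2*β))^2
        ≤ ∫ β in Set.Ioo (0:ℝ) (Real.pi/2), (1:ℝ) := by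
      apply integral_mono (cont_int _ (by fun_prop)) (cont_int _ (by fun_prop))
      intro β
      exact Real.sin_sq_le_one _
    refine this.trans ?_
    simp [Real.pi_pos.le]
    linarith [Real.pi_le_four]
  change 0 ≤ _ - c * c + _ at h0
  nlinarith [mul_le_mul_of_nonneg_left hB (sq_nonneg c)]

lemma key (Ω : ℝ → ℝ → ℝ) (hΩ : Continuous (Function.uncurry Ω)) (w : ℝ → ℝ)
    (hI : Integrable2 (fun R β => (w R * Ω R β)^2)) :
    ∫⁻ s in Ioi (0:ℝ), ENNReal.ofReal (w s ^2 * Fav Ω s ^2)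
      ≤ ENNReal.ofReal (2 * norm2 (fun R β => w R * Ω R β) ^2) := by
  unfold Integrable2 Qdom at hI
  rw [IntegrableOn, Measure.volume_eq_prod, ← Measure.prod_restrict] at hI
  have h1 := hI.integral_prod_left
  simp only [Function.uncurry_apply_pair] at h1
  have hn : norm2 (fun R β => w R * Ω R β) ^2
      = ∫ R in Ioi (0:ℝ), ∫ β in Set.Ioo (0:ℝ) (Real.pi/2), (w R * Ω R β)^2 := by
    unfold norm2 inner2
    rw [Real.sq_sqrt]
    · simp_rw [← pow_two]
    · exact integral_nonneg fun R => integral_nonneg fun β => mul_self_nonneg _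
  rw [hn, ← integral_const_mul, ofReal_integral_eq_lintegral_ofReal (h1.const_mul 2)
    (Filter.Eventually.of_forall fun R => mul_nonneg zero_le_two
      (integral_nonneg fun β => sq_nonneg _))]
  refine lintegral_mono fun s => ENNReal.ofReal_le_ofReal ?_
  simp_rw [mul_pow]
  rw [integral_const_mul]
  nlinarith [mul_le_mul_of_nonneg_left (Fav_sq Ω hΩ s) (sq_nonneg (w s))]

lemma int_le (h : ℝ → ℝ) (M : ℝ) (hM : 0 ≤ M)
    (hle : ∫⁻ R in Ioi (0:ℝ), ‖h R‖ₑ ≤ ENNReal.ofReal M) : ∫ R in Ioi (0:ℝ), h R ≤ M := by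
  have := (enorm_integral_le_lintegral_enorm (μ := volume.restrict (Ioi (0:ℝ))) h).trans hle
  rw [← ofReal_norm, ENNReal.ofReal_le_ofReal_iff hM] at this
  exact (le_abs_self _).trans this

lemma normR_le (h : ℝ → ℝ) (N : ℝ) (hN : 0 ≤ N)
    (hle : ∫⁻ R in Ioi (0:ℝ), ‖h R‖ₑ^2 ≤ ENNReal.ofReal (484 * N^2)) : normR h ≤ 22 * N := by
  unfold normR
  apply Real.sqrt_le_iff.2 ⟨by positivity, ?_⟩
  rw [show (22*N)^2 = 484 * N^2 by ring]
  apply int_le _ _ (by positivity)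
  simpa only [enorm_pow] using hle

lemma L12_enorm (Ω : ℝ → ℝ → ℝ) (R : ℝ) : ‖L12 Ω R‖ₑ ≤ ∫⁻ s in Ioi R, ‖Fav Ω s / s‖ₑ := by
  rw [L12_eq]; exact enorm_integral_le_lintegral_enorm _

lemma tL12_enorm (Ω : ℝ → ℝ → ℝ) (hΩ : Continuous (Function.uncurry Ω)) (R : ℝ) (hR : 0 < R)
    (hfin : ∫⁻ s in Ioi (0:ℝ), ‖Fav Ω s / s‖ₑ < ⊤) :
    ‖tL12 Ω R‖ₑ ≤ ∫⁻ s in Ioc 0 R, ‖Fav Ω s / s‖ₑ := by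
  have hm := Fav_meas Ω hΩ
  have hint : IntegrableOn (fun s => Fav Ω s / s) (Ioi 0) :=
    ⟨(hm.div measurable_id).aestronglyMeasurable, hfin⟩
  have hu : ∫ s in Ioi (0:ℝ), Fav Ω s / s
      = (∫ s in Ioc 0 R, Fav Ω s / s) + ∫ s in Ioi R, Fav Ω s / s := by
    rw [← setIntegral_union (Ioc_disjoint_Ioi le_rfl) measurableSet_Ioi
      (hint.mono_set Ioc_subset_Ioi_self) (hint.mono_set (Ioi_subset_Ioi hR.le)),
      Ioc_union_Ioi_eq_Ioi hR.le]
  unfold tL12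
  rw [L12_eq, L12_eq, hu, sub_add_cancel_right, enorm_neg]
  exact enorm_integral_le_lintegral_enorm _

lemma lint_w_mono (F w v : ℝ → ℝ) (h : ∀ s, 0 < s → w s ≤ v s) :
    ∫⁻ s in Ioi (0:ℝ), ENNReal.ofReal (w s * F s ^2)
      ≤ ∫⁻ s in Ioi (0:ℝ), ENNReal.ofReal (v s * F s ^2) :=
  setLIntegral_mono' measurableSet_Ioi fun s hs =>
    ENNReal.ofReal_le_ofReal (mul_le_mul_of_nonneg_right (h s hs) (sq_nonneg _))

lemma w_eq (s : ℝ) (hs : 0 < s) : (1+s)/s = 1 + s⁻¹ := by field_simp; ring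

lemma w_one_le (s : ℝ) (hs : 0 < s) (k : ℕ) : 1 ≤ (((1+s)/s)^k)^2 := by
  rw [w_eq s hs]
  have : 0 < s⁻¹ := by positivity
  exact one_le_pow₀ (one_le_pow₀ (by linarith))

lemma w_sq_le (s : ℝ) (hs : 0 < s) (k : ℕ) (hk : 1 ≤ k) : ((1+s)/s)^2 ≤ (((1+s)/s)^k)^2 := by
  rw [w_eq s hs, ← pow_mul]
  have : 0 < s⁻¹ := by positivity
  exact pow_le_pow_right₀ (by linarith) (by omega)

lemma w_inv_le (s : ℝ) (hs : 0 < s) (k n : ℕ) (hn : n ≤ 2 * k) :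
    (s^n)⁻¹ ≤ (((1+s)/s)^k)^2 := by
  rw [w_eq s hs, ← pow_mul, ← inv_pow]
  have : 0 < s⁻¹ := by positivity
  refine (pow_le_pow_left₀ this.le (by linarith : s⁻¹ ≤ 1 + s⁻¹) n).trans ?_
  exact pow_le_pow_right₀ (by linarith) (by omega)

lemma part_one (Ω : ℝ → ℝ → ℝ) (hΩ : Continuous (Function.uncurry Ω)) (k : ℕ) (hk : 1 ≤ k)
    (hI : Integrable2 (fun R β => (((1+R)/R)^k * Ω R β)^2)) :
    (∫⁻ s in Ioi (0:ℝ), ‖Fav Ω s / s‖ₑ)^2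
      ≤ ENNReal.ofReal (2 * norm2 (fun R β => ((1+R)/R)^k * Ω R β) ^2) :=
  ((sup_bound _ (Fav_meas Ω hΩ)).trans (lint_w_mono _ _ _ fun s hs => w_sq_le s hs k hk)).trans
    (key Ω hΩ (fun R => ((1+R)/R)^k) hI)

lemma part_fin (Ω : ℝ → ℝ → ℝ) (hΩ : Continuous (Function.uncurry Ω)) (k : ℕ) (hk : 1 ≤ k)
    (hI : Integrable2 (fun R β => (((1+R)/R)^k * Ω R β)^2)) :
    ∫⁻ s in Ioi (0:ℝ), ‖Fav Ω s / s‖ₑ < ⊤ := by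
  have := (part_one Ω hΩ k hk hI).trans_lt ENNReal.ofReal_lt_top
  by_contra h
  rw [not_lt, top_le_iff] at h
  rw [h] at this
  simp at this

lemma part_head (Ω : ℝ → ℝ → ℝ) (hΩ : Continuous (Function.uncurry Ω)) (k n : ℕ)
    (hn : 2 ≤ n) (hnk : n ≤ 2 * k)
    (hI : Integrable2 (fun R β => (((1+R)/R)^k * Ω R β)^2)) :
    ∫⁻ R in Ioi (0:ℝ), ENNReal.ofReal ((R^n)⁻¹) * (∫⁻ s in Ioc 0 R, ‖Fav Ω s / s‖ₑ)^2
      ≤ ENNReal.ofReal (8 * norm2 (fun R β => ((1+R)/R)^k * Ω R β) ^2) := by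
  refine (hardy_head_nat _ (Fav_meas Ω hΩ) n hn).trans ?_
  refine (mul_le_mul_right ((lint_w_mono _ _ _ fun s hs => w_inv_le s hs k n hnk).trans
    (key Ω hΩ (fun R => ((1+R)/R)^k) hI)) _).trans ?_
  rw [← ENNReal.ofReal_mul (by norm_num)]
  apply le_of_eq; congr 1; ring

lemma part_tail (Ω : ℝ → ℝ → ℝ) (hΩ : Continuous (Function.uncurry Ω)) (k : ℕ)
    (hI : Integrable2 (fun R β => (((1+R)/R)^k * Ω R β)^2)) :
    ∫⁻ R in Ioi (0:ℝ), (∫⁻ s in Ioi R, ‖Fav Ω s / s‖ₑ)^2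
      ≤ ENNReal.ofReal (8 * norm2 (fun R β => ((1+R)/R)^k * Ω R β) ^2) := by
  refine (hardy_tail _ (Fav_meas Ω hΩ)).trans ?_
  have h1 := lint_w_mono (Fav Ω) (fun _ => 1) _ fun s hs => w_one_le s hs k
  simp only [one_mul] at h1
  refine (mul_le_mul_right (h1.trans (key Ω hΩ (fun R => ((1+R)/R)^k) hI)) _).trans ?_
  rw [← ENNReal.ofReal_mul (by norm_num)]
  apply le_of_eq; congr 1; ring

lemma norm2_nonneg (f : ℝ → ℝ → ℝ) : 0 ≤ norm2 f := Real.sqrt_nonneg _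

lemma tail_mono (F : ℝ → ℝ) (R : ℝ) (hR : 0 ≤ R) :
    ∫⁻ s in Ioi R, ‖F s / s‖ₑ ≤ ∫⁻ s in Ioi (0:ℝ), ‖F s / s‖ₑ :=
  lintegral_mono_set (Ioi_subset_Ioi hR)

lemma est_i (Ω : ℝ → ℝ → ℝ) (hΩ : Continuous (Function.uncurry Ω))
    (hI : Integrable2 (fun R β => ((1+R)/R * Ω R β)^2)) (R : ℝ) (hR : 0 ≤ R) :
    |L12 Ω R| ≤ 22 * norm2 (fun R β => (1+R)/R * Ω R β) := by
  have h := part_one Ω hΩ 1 le_rfl (by simpa using hI)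
  simp only [pow_one] at h
  set N := norm2 (fun R β => (1+R)/R * Ω R β)
  have hN : 0 ≤ N := norm2_nonneg _
  have h2 := (pow_le_pow_left' ((L12_enorm Ω R).trans (tail_mono _ R hR)) 2).trans h
  rw [← enorm_pow, ← ofReal_norm, ENNReal.ofReal_le_ofReal_iff (by positivity), norm_pow,
    norm_eq_abs] at h2
  apply abs_le_of_sq_le_sq' _ (by positivity) |>.2
  nlinarith

lemma est_ii (Ω : ℝ → ℝ → ℝ) (hΩ : Continuous (Function.uncurry Ω))
    (hI : Integrable2 (fun R β => ((1+R)^2/R^2 * Ω R β)^2)) :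
    (∫ R in Set.Ioi (0:ℝ), (tL12 Ω R)^2 * ((R^2)⁻¹ + (R^3)⁻¹))
          ≤ 22 * (norm2 (fun R β => (1+R)^2/R^2 * Ω R β))^2 := by
  simp only [← div_pow] at hI ⊢
  have h2 := part_head Ω hΩ 2 2 le_rfl (by norm_num) hI
  have h3 := part_head Ω hΩ 2 3 (by norm_num) (by norm_num) hI
  have hfin := part_fin Ω hΩ 2 (by norm_num) hI
  set N := norm2 (fun R β => ((1+R)/R)^2 * Ω R β)
  apply int_le _ _ (by positivity)
  have hpt : ∀ R ∈ Ioi (0:ℝ), ‖(tL12 Ω R)^2 * ((R^2)⁻¹ + (R^3)⁻¹)‖ₑ ≤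
      ENNReal.ofReal ((R^2)⁻¹) * (∫⁻ s in Ioc 0 R, ‖Fav Ω s / s‖ₑ)^2
      + ENNReal.ofReal ((R^3)⁻¹) * (∫⁻ s in Ioc 0 R, ‖Fav Ω s / s‖ₑ)^2 := by
    intro R hR
    have hR0 : (0:ℝ) < R := hR
    rw [enorm_mul, enorm_pow, ← add_mul, ← ENNReal.ofReal_add (by positivity) (by positivity),
      mul_comm, Real.enorm_of_nonneg (by positivity : 0 ≤ (R^2)⁻¹ + (R^3)⁻¹)]
    gcongr
    exact tL12_enorm Ω hΩ R hR0 hfin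
  refine (setLIntegral_mono' measurableSet_Ioi hpt).trans ?_
  have hmeas : Measurable fun R : ℝ => ∫⁻ s in Ioc 0 R, ‖Fav Ω s / s‖ₑ :=
    Monotone.measurable fun a b hab => lintegral_mono_set (Ioc_subset_Ioc_right hab)
  rw [lintegral_add_left (by fun_prop)]
  refine (add_le_add h2 h3).trans ?_
  rw [← ENNReal.ofReal_add (by positivity) (by positivity)]
  apply ENNReal.ofReal_le_ofReal
  nlinarith [sq_nonneg N]

lemma est_iii (Ω : ℝ → ℝ → ℝ) (hΩ : Continuous (Function.uncurry Ω))
    (hI : Integrable2 (fun R β => (Ω R β)^2)) : normR (L12 Ω) ≤ 22 * norm2 Ω := by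
  have h := part_tail Ω hΩ 0 (by simpa using hI)
  simp only [pow_zero, one_mul] at h
  apply normR_le _ _ (norm2_nonneg _)
  refine (lintegral_mono fun R => pow_le_pow_left' (L12_enorm Ω R) 2).trans (h.trans ?_)
  apply ENNReal.ofReal_le_ofReal
  change 8 * norm2 Ω ^2 ≤ _
  nlinarith [sq_nonneg (norm2 Ω)]

lemma est_iv (χ : ℝ → ℝ)
    (hχ01 : ∀ R : ℝ, χ R ∈ Set.Icc (0:ℝ) 1)
    (hχ1 : ∀ R : ℝ, R ≤ 1 → χ R = 1) (hχ2 : ∀ R : ℝ, 2 ≤ R → χ R = 0)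
    (Ω : ℝ → ℝ → ℝ) (hΩ : Continuous (Function.uncurry Ω)) (k : ℕ) (hk : 1 ≤ k) (hk2 : k ≤ 2)
    (hI : Integrable2 (fun R β => (((1+R)/R)^k * Ω R β)^2)) :
    normR (fun R => ((1+R)/R)^k * (L12 Ω R - L12 Ω 0 * χ R))
      ≤ 22 * norm2 (fun R β => ((1+R)/R)^k * Ω R β) := by
  have h1 := part_one Ω hΩ k hk hI
  have hH := part_head Ω hΩ k (2*k) (by omega) le_rfl hI
  have hT := part_tail Ω hΩ k hI
  have hfin := part_fin Ω hΩ k hk hI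
  set N := norm2 (fun R β => ((1+R)/R)^k * Ω R β)
  apply normR_le _ _ (norm2_nonneg _)
  set S0 := ∫⁻ s in Ioi (0:ℝ), ‖Fav Ω s / s‖ₑ with hS0
  have h2k : (2^k : ℝ)^2 ≤ 16 := by
    rw [← pow_mul]
    calc (2:ℝ)^(k*2) ≤ 2^4 := pow_le_pow_right₀ (by norm_num) (by omega)
      _ = 16 := by norm_num
  have hpt : ∀ R ∈ Ioi (0:ℝ), ‖((1+R)/R)^k * (L12 Ω R - L12 Ω 0 * χ R)‖ₑ^2 ≤
      ENNReal.ofReal 16 * (ENNReal.ofReal ((R^(2*k))⁻¹) * (∫⁻ s in Ioc 0 R, ‖Fav Ω s / s‖ₑ)^2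
        + (∫⁻ s in Ioi R, ‖Fav Ω s / s‖ₑ)^2
        + (Ioc (1:ℝ) 2).indicator (fun _ => (2 * S0)^2) R) := by
    intro R hR
    have hR0 : (0:ℝ) < R := hR
    rw [enorm_mul, mul_pow, ← enorm_pow, Real.enorm_of_nonneg (by positivity)]
    rcases le_or_gt R 1 with hle | hgt
    · rw [hχ1 R hle, mul_one]
      have ht := tL12_enorm Ω hΩ R hR0 hfin
      unfold tL12 at ht
      refine le_trans ?_ (mul_le_mul_right (le_add_right le_self_add) _)
      rw [← mul_assoc, ← ENNReal.ofReal_mul (by norm_num)]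
      gcongr
      calc (((1+R)/R)^k)^2 ≤ ((2/R)^k)^2 := by gcongr; linarith
        _ = (2^k)^2 * (R^(2*k))⁻¹ := by rw [div_pow, div_pow, ← pow_mul R, mul_comm k 2]; rfl
        _ ≤ 16 * (R^(2*k))⁻¹ := by gcongr
    · have hw : (((1+R)/R)^k)^2 ≤ 16 := by
        refine le_trans ?_ h2k
        gcongr
        rw [div_le_iff₀ hR0]; linarith
      rcases le_or_gt R 2 with hle2 | hgt2
      · rw [indicator_of_mem (show R ∈ Ioc (1:ℝ) 2 from ⟨hgt, hle2⟩)]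
        gcongr
        refine le_trans (pow_le_pow_left' ?_ 2) le_add_self
        refine (enorm_sub_le).trans ?_
        rw [two_mul]
        apply add_le_add ((L12_enorm Ω R).trans (tail_mono _ R hR0.le))
        rw [enorm_mul]
        have hc : ‖χ R‖ₑ ≤ 1 := by
          rw [Real.enorm_of_nonneg (hχ01 R).1]
          exact ENNReal.ofReal_le_one.2 (hχ01 R).2
        exact (mul_le_mul' (L12_enorm Ω 0) hc).trans (mul_one _).le
      · rw [hχ2 R hgt2.le, mul_zero, sub_zero]
        gcongr
        refine le_trans (pow_le_pow_left' (L12_enorm Ω R) 2) ?_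
        exact le_add_right le_add_self
  refine (setLIntegral_mono' measurableSet_Ioi hpt).trans ?_
  have hmeas : Measurable fun R : ℝ => ∫⁻ s in Ioc 0 R, ‖Fav Ω s / s‖ₑ :=
    Monotone.measurable fun a b hab => lintegral_mono_set (Ioc_subset_Ioc_right hab)
  have hmeas2 : Measurable fun R : ℝ => ∫⁻ s in Ioi R, ‖Fav Ω s / s‖ₑ :=
    Antitone.measurable fun a b hab => lintegral_mono_set (Ioi_subset_Ioi hab)
  have hmeas3 : Measurable ((Ioc (1:ℝ) 2).indicator (fun _ => (2 * S0)^2)) :=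
    measurable_const.indicator measurableSet_Ioc
  rw [lintegral_const_mul _ (by fun_prop), lintegral_add_right _ hmeas3,
    lintegral_add_left (by fun_prop)]
  have h3 : ∫⁻ R in Ioi (0:ℝ), (Ioc (1:ℝ) 2).indicator (fun _ => (2 * S0)^2) R
      ≤ ENNReal.ofReal (8 * N^2) := by
    refine (setLIntegral_le_lintegral _ _).trans ?_
    rw [lintegral_indicator measurableSet_Ioc, setLIntegral_const, Real.volume_Ioc]
    rw [show (2:ℝ) - 1 = 1 by norm_num, ENNReal.ofReal_one, mul_one]
    rw [mul_pow, show (8:ℝ) * N^2 = 4 * (2 * N^2) by ring, ENNReal.ofReal_mul (by norm_num)]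
    refine mul_le_mul' ?_ h1
    norm_num
  refine (mul_le_mul_right (add_le_add (add_le_add hH hT) h3) _).trans ?_
  rw [← ENNReal.ofReal_add (by positivity) (by positivity),
    ← ENNReal.ofReal_add (by positivity) (by positivity), ← ENNReal.ofReal_mul (by norm_num)]
  apply ENNReal.ofReal_le_ofReal
  nlinarith [sq_nonneg N]

/-- basic estimates of `L₁₂(Ω)`. -/
theorem L12_estimates
    (χ : ℝ → ℝ) (hχsm : ContDiff ℝ (⊤ : ℕ∞) χ)
    (hχ01 : ∀ R : ℝ, χ R ∈ Set.Icc (0:ℝ) 1)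
    (hχ1 : ∀ R : ℝ, R ≤ 1 → χ R = 1) (hχ2 : ∀ R : ℝ, 2 ≤ R → χ R = 0) :
    ∃ C : ℝ, ∀ Ω : ℝ → ℝ → ℝ, Continuous (Function.uncurry Ω) →
      (Integrable2 (fun R β => ((1+R)/R * Ω R β)^2) →
        ∀ R : ℝ, 0 ≤ R → |L12 Ω R| ≤ C * norm2 (fun R β => (1+R)/R * Ω R β)) ∧
      (Integrable2 (fun R β => ((1+R)^2/R^2 * Ω R β)^2) →
        (∫ R in Set.Ioi (0:ℝ), (tL12 Ω R)^2 * ((R^2)⁻¹ + (R^3)⁻¹))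
          ≤ C * (norm2 (fun R β => (1+R)^2/R^2 * Ω R β))^2) ∧
      (Integrable2 (fun R β => (Ω R β)^2) → normR (L12 Ω) ≤ C * norm2 Ω) ∧
      (∀ k : ℕ, k = 1 ∨ k = 2 →
        Integrable2 (fun R β => (((1+R)/R)^k * Ω R β)^2) →
        normR (fun R => ((1+R)/R)^k * (L12 Ω R - L12 Ω 0 * χ R))
          ≤ C * norm2 (fun R β => ((1+R)/R)^k * Ω R β)) := by
  refine ⟨22, fun Ω hΩ => ⟨est_i Ω hΩ, est_ii Ω hΩ, est_iii Ω hΩ, fun k hk hI => ?_⟩⟩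
  exact est_iv χ hχ01 hχ1 hχ2 Ω hΩ k (by omega) (by omega) hI

end Paper
end
end
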